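/- arXiv:1401.7498 — 2 statements merged into one kernel-verified Lean document; each statement's English description precedes it below -/
import Mathlib

section
/- Let E₁, …, E_m be nontrivial word equations on n unknowns such that Sol_{n−1}(E₁) ⊋ Sol_{n−1}(E₁, E₂) ⊋ ⋯ ⊋ Sol_{n−1}(E₁, …, E_m) ≠ ∅, where Sol_{n−1} denotes the set of common solutions of rank n − 1. Then there exist two unknowns x, y ∈ Ξ such that m ≤ (|E₁|_x + |E₁|_y)² + 1. -/
open Polynomial

/-- The characteristic polynomial `P(w)` of a word. -/
noncomputable def wordPoly (w : List ℕ) : Polynomial ℤ :=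
  ∑ i ∈ Finset.range w.length, Polynomial.C (w.getD i 0 : ℤ) * Polynomial.X ^ i

/-- Application of a morphism (given by the images of the unknowns) to a word. -/
def mApply {n : ℕ} {β : Type*} (h : Fin n → List β) (w : List (Fin n)) : List β :=
  (w.map h).flatten

/-- The morphism maps every unknown to a word over the alphabet `A`. -/
def IntoAlph {n : ℕ} (A : Finset ℕ) (h : Fin n → List ℕ) : Prop :=
  ∀ i, ∀ a ∈ h i, a ∈ A

/-- `w` is a product of words from `A`. -/
def InStar (A : Finset (List ℕ)) (w : List ℕ) : Prop :=
  ∃ l : List (List ℕ), (∀ u ∈ l, u ∈ A) ∧ l.flatten = w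

/-- The combinatorial rank of a morphism: the smallest `r` such that there is a set of
`r` words whose products contain all images of the unknowns. -/
noncomputable def mRank {n : ℕ} (h : Fin n → List ℕ) : ℕ :=
  sInf {r | ∃ A : Finset (List ℕ), A.card = r ∧ ∀ i, InStar A (h i)}

/-- The length type of a morphism, as a rational vector. -/
def lenQ {n : ℕ} (h : Fin n → List ℕ) : Fin n → ℚ :=
  fun i => ((h i).length : ℚ)

/-- `|w|_L`: the length of the image of `w` under any morphism of length type `L`. -/
def lenL {n : ℕ} (L : Fin n → ℕ) (w : List (Fin n)) : ℕ :=
  (w.map L).sum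

/-- The polynomial `Q_{E,x,L}` for the word equation `u = v`, the unknown `x` and the
length type `L`. -/
noncomputable def eqPoly {n : ℕ} (u v : List (Fin n)) (x : Fin n) (L : Fin n → ℕ) :
    Polynomial ℤ :=
  (∑ i ∈ Finset.range u.length,
      if u.getD i x = x then (Polynomial.X : Polynomial ℤ) ^ lenL L (u.take i) else 0)
    - ∑ i ∈ Finset.range v.length,
      if v.getD i x = x then (Polynomial.X : Polynomial ℤ) ^ lenL L (v.take i) else 0

/-- Embedding of `ℤ[X]` into the field `ℚ(X)` of rational functions. -/
noncomputable def toRF (p : Polynomial ℤ) : RatFunc ℚ :=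
  algebraMap (Polynomial ℚ) (RatFunc ℚ) (p.map (Int.castRingHom ℚ))

/-!
Evaluating the Fox derivatives of an equation at commuting monomials turns the statement that `α`
solves the equation into a linear relation: the row of the equation annihilates the Jacobian of `α`.
By a Nielsen-type descent every solution `h` of a nontrivial equation factors through some `α` into
words over `n - 1` letters whose occurrence matrix has full rank, and if `h` has rank `n - 1`, then
`α` solves the same equations as `h`. So if `h` solves both `E₁` and `E₂`, their rows become
proportional once the unknowns are replaced by the monomials of their images under `α`: all 2 × 2
minors of the two rows vanish there.

Conversely, if all minors vanish already before the substitution, or along the length type of a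
solution of `E₁`, then that solution also solves `E₂`. In a strict chain some minor, in the columns
`x` and `y` say, is therefore nonzero and becomes zero after each of the substitutions that belong
to the solutions of `E₁, E₂`. The terms of lexicographically lowest image must cancel, so some
minimal exponents `f` and `g` of the positive and negative parts have the same image, and `f - g`
annihilates the occurrence matrix of `α`. This matrix has corank one, so `f - g` determines the
space of length types, and two solutions sharing `(f, g)` solve the same equations. Each part is a
sum of products of polynomials whose exponents form chains and hence has at most
`N = |E₁|_x + |E₁|_y` minimal exponents. This leaves at most `N ^ 2` pairs for the `m - 1` solutions
of `E₁, E₂` that separate the steps of the chain.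
-/

section LinearAlgebra

open scoped Matrix

theorem mulVec_injective_of_map {ι κ R F : Type*} [Finite ι] [Fintype κ] [CommRing R] [IsDomain R]
    [Field F] [LinearOrder F] [IsStrictOrderedRing F] (f : R →+* F) {M : Matrix ι κ R}
    (hM : Function.Injective (M.map f).mulVec) : Function.Injective M.mulVec := by
  classical
  have := Fintype.ofFinite ι
  have hgramF : ((M.map f)ᵀ * M.map f).det ≠ 0 := by
    intro hdet
    obtain ⟨v, hv, hv0⟩ := Matrix.exists_mulVec_eq_zero_iff.mpr hdet
    have hker : v ∈ LinearMap.ker ((M.map f)ᵀ * M.map f).mulVecLin := hv0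
    rw [Matrix.ker_mulVecLin_transpose_mul_self] at hker
    exact hv (hM (hker.trans (Matrix.mulVec_zero _).symm))
  have hgram : (Mᵀ * M).det ≠ 0 := by
    intro hdet
    refine hgramF ?_
    rw [← Matrix.transpose_map, ← Matrix.map_mul, ← RingHom.mapMatrix_apply, ← RingHom.map_det,
      hdet, map_zero]
  rw [← Matrix.coe_mulVecLin, injective_iff_map_eq_zero]
  intro v hv
  refine Matrix.eq_zero_of_mulVec_eq_zero hgram ?_
  rw [← Matrix.mulVec_mulVec, ← Matrix.mulVecLin_apply M, hv, Matrix.mulVec_zero]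

variable {ι κ : Type*} [Fintype ι] [Fintype κ]

theorem mul_eq_mul_of_vecMul_eq_zero {R : Type*} [CommRing R] [IsDomain R] {M : Matrix ι κ R}
    (hM : Function.Injective M.mulVec) (hcard : Fintype.card ι ≤ Fintype.card κ + 1)
    {r r' : ι → R} (hr : r ᵥ* M = 0) (hr' : r' ᵥ* M = 0) (x y : ι) :
    r x * r' y = r y * r' x := by
  classical
  by_contra hdet
  have hxy : x ≠ y := by
    rintro rfl
    exact hdet rfl
  -- Deleting the rows `x` and `y` of `M` keeps it injective, although it leaves too few rows.
  let π : (ι → R) →ₗ[R] (({x, y}ᶜ : Finset ι) → R) := LinearMap.funLeft R R Subtype.val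
  have hinj : Function.Injective (π ∘ₗ M.mulVecLin) := by
    rw [injective_iff_map_eq_zero]
    intro c hc
    have hoff : ∀ z, z ≠ x ∧ z ≠ y → (M *ᵥ c) z = 0 := fun z hz =>
      congrFun hc ⟨z, by simpa using hz⟩
    have hpair : ∀ s : ι → R, s ᵥ* M = 0 → s x * (M *ᵥ c) x + s y * (M *ᵥ c) y = 0 := by
      intro s hs
      have hsum : s ⬝ᵥ M *ᵥ c = s x * (M *ᵥ c) x + s y * (M *ᵥ c) y :=
        Fintype.sum_eq_add x y hxy fun z hz => by rw [hoff z hz, mul_zero]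
      rw [← hsum, Matrix.dotProduct_mulVec, hs, zero_dotProduct]
    have hdet' : r x * r' y - r y * r' x ≠ 0 := sub_ne_zero.mpr hdet
    have hx : (M *ᵥ c) x = 0 := (mul_eq_zero.mp (by
      linear_combination r' y * hpair r hr - r y * hpair r' hr')).resolve_left hdet'
    have hy : (M *ᵥ c) y = 0 := (mul_eq_zero.mp (by
      linear_combination r x * hpair r' hr' - r' x * hpair r hr)).resolve_left hdet'
    refine hM (Eq.trans (funext fun z => ?_) (Matrix.mulVec_zero M).symm)
    by_cases hz : z ≠ x ∧ z ≠ y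
    · exact hoff z hz
    · obtain rfl | rfl : z = x ∨ z = y := by tauto
      exacts [hx, hy]
  have hle := card_le_of_injective R (π ∘ₗ M.mulVecLin) hinj
  rw [Fintype.card_coe, Finset.card_compl, Finset.card_pair hxy] at hle
  have := Finset.card_le_univ {x, y}
  rw [Finset.card_pair hxy] at this
  omega

theorem mem_range_mulVec_iff {F : Type*} [Field F] {M : Matrix ι κ F}
    (hM : Function.Injective M.mulVec) (hcard : Fintype.card ι = Fintype.card κ + 1)
    {d : ι → F} (hd : d ≠ 0) (hdM : d ᵥ* M = 0) (v : ι → F) :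
    v ∈ Set.range M.mulVec ↔ d ⬝ᵥ v = 0 := by
  classical
  let δ : Module.Dual F (ι → F) := dotProductEquiv F ι d
  have hδ : δ ≠ 0 := by simpa [δ] using hd
  have hle : LinearMap.range M.mulVecLin ≤ LinearMap.ker δ := by
    rintro _ ⟨c, rfl⟩
    exact (Matrix.dotProduct_mulVec d M c).trans (by rw [hdM, zero_dotProduct])
  have hrange : LinearMap.range M.mulVecLin = LinearMap.ker δ := by
    refine Submodule.eq_of_le_of_finrank_eq hle ?_
    have hker := Module.Dual.finrank_ker_add_one_of_ne_zero hδ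
    rw [LinearMap.finrank_range_of_inj hM, Module.finrank_fintype_fun_eq_card]
    rw [Module.finrank_fintype_fun_eq_card] at hker
    omega
  exact SetLike.ext_iff.mp hrange v

end LinearAlgebra

section Antichains

open scoped Finset Pointwise

theorem card_le_card_of_isAntichain_subset_add {M : Type*} [AddCommMonoid M] [PartialOrder M]
    [IsOrderedAddMonoid M] [DecidableEq M] {T A B : Finset M}
    (hT : IsAntichain (· ≤ ·) (T : Set M)) (hB : IsChain (· ≤ ·) (B : Set M)) (hTAB : T ⊆ A + B) :
    #T ≤ #A := by
  refine Finset.card_le_card_of_forall_subsingleton (fun t a => ∃ b ∈ B, a + b = t) ?_ ?_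
  · intro t ht
    obtain ⟨a, ha, b, hb, rfl⟩ := Finset.mem_add.mp (hTAB ht)
    exact ⟨a, ha, b, hb, rfl⟩
  · rintro a - _ ⟨ht, b, hb, rfl⟩ _ ⟨ht', b', hb', rfl⟩
    rcases hB.total hb hb' with hbb' | hbb'
    · exact hT.eq ht ht' (add_le_add_right hbb' a)
    · exact (hT.eq ht' ht (add_le_add_right hbb' a)).symm

/-- Every antichain in the finite set `s` has at most `N` elements. -/
def WidthLE {E : Type*} [PartialOrder E] (s : Finset E) (N : ℕ) : Prop :=
  ∀ T ⊆ s, IsAntichain (· ≤ ·) (T : Set E) → #T ≤ N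

section Width

variable {E : Type*} [PartialOrder E] {s t : Finset E} {N K : ℕ}

theorem WidthLE.mono (ht : WidthLE t N) (hst : s ⊆ t) : WidthLE s N :=
  fun T hT hanti => ht T (hT.trans hst) hanti

theorem WidthLE.union [DecidableEq E] (hs : WidthLE s N) (ht : WidthLE t K) :
    WidthLE (s ∪ t) (N + K) := by
  intro T hT hanti
  calc #T = #(T ∩ s ∪ T ∩ t) := by
        rw [← Finset.inter_union_distrib_left, Finset.inter_eq_left.mpr hT]
    _ ≤ #(T ∩ s) + #(T ∩ t) := Finset.card_union_le _ _
    _ ≤ N + K := add_le_add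
        (hs _ Finset.inter_subset_right (hanti.subset (by simp)))
        (ht _ Finset.inter_subset_right (hanti.subset (by simp)))

end Width

end Antichains

section Cancellation

variable {E Γ : Type*}

theorem exists_lt_of_mapDomain_eq (φ : E → Γ) {p q : E →₀ ℕ}
    (h : p.mapDomain φ = q.mapDomain φ) {d : E} (hd : q d < p d) :
    ∃ d', φ d' = φ d ∧ p d' < q d' := by
  classical
  by_contra! hle
  let s := p.support ∪ q.support
  have hsum : ∀ r : E →₀ ℕ, r.support ⊆ s →
      r.mapDomain φ (φ d) = ∑ a ∈ s with φ a = φ d, r a := by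
    intro r hr
    rw [Finsupp.mapDomain, Finsupp.sum_of_support_subset r hr _ (by simp), Finsupp.finsetSum_apply,
      Finset.sum_filter]
    simp only [Finsupp.single_apply]
  refine (Finset.sum_lt_sum (fun a ha => hle a (Finset.mem_filter.mp ha).2)
    ⟨d, ?_, hd⟩).ne ((hsum q Finset.subset_union_right).symm.trans
      ((DFunLike.congr_fun h _).symm.trans (hsum p Finset.subset_union_left)))
  simp only [s, Finset.mem_filter, Finset.mem_union, Finsupp.mem_support_iff]
  exact ⟨Or.inl (by omega), trivial⟩

/-- The minimal points at which `p` exceeds `q`. -/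
noncomputable def minimalExcess [PartialOrder E] (p q : E →₀ ℕ) : Finset E :=
  open Classical in {d ∈ p.support | Minimal (fun a => q a < p a) d}

theorem mem_minimalExcess [PartialOrder E] {p q : E →₀ ℕ} {d : E} :
    d ∈ minimalExcess p q ↔ Minimal (fun a => q a < p a) d := by
  simp only [minimalExcess, Finset.mem_filter, Finsupp.mem_support_iff, and_iff_right_iff_imp]
  intro hd
  have := hd.prop
  omega

theorem WidthLE.card_minimalExcess_le [PartialOrder E] {p : E →₀ ℕ} {N : ℕ}
    (hp : WidthLE p.support N) (q : E →₀ ℕ) : (minimalExcess p q).card ≤ N := by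
  classical
  refine hp _ (Finset.filter_subset _ _) ?_
  refine (setOfPred_minimal_antichain fun a => q a < p a).subset fun d hd => ?_
  exact mem_minimalExcess.mp hd

theorem exists_mem_minimalExcess_le [PartialOrder E] {p q : E →₀ ℕ} {d : E} (hd : q d < p d) :
    ∃ f ∈ minimalExcess p q, f ≤ d := by
  classical
  have hmem (a : E) : a ∈ ({a ∈ p.support | q a < p a} : Finset E) ↔ q a < p a := by
    simp only [Finset.mem_filter, Finsupp.mem_support_iff, and_iff_right_iff_imp]
    omega
  obtain ⟨f, hfd, hf⟩ := Finset.exists_le_minimal _ ((hmem d).mpr hd)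
  simp only [hmem] at hf
  exact ⟨f, mem_minimalExcess.mpr hf, hfd⟩

theorem exists_minimalExcess_map_eq [PartialOrder E] [LinearOrder Γ] {φ : E → Γ} (hφ : Monotone φ)
    {p q : E →₀ ℕ} (hpq : p ≠ q) (h : p.mapDomain φ = q.mapDomain φ) :
    ∃ f ∈ minimalExcess p q, ∃ g ∈ minimalExcess q p, φ f = φ g := by
  classical
  let D : Finset E := {d ∈ p.support ∪ q.support | p d ≠ q d}
  have hmem : ∀ d, d ∈ D ↔ p d ≠ q d := by
    intro d
    simp only [D, Finset.mem_filter, Finset.mem_union, Finsupp.mem_support_iff]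
    omega
  obtain ⟨d₀, hd₀⟩ := DFunLike.ne_iff.mp hpq
  obtain ⟨d, hd, hmin⟩ := D.exists_min_image φ ⟨d₀, (hmem d₀).mpr hd₀⟩
  obtain ⟨a, b, ha, hb, hpa, hqb⟩ : ∃ a b, φ a = φ d ∧ φ b = φ d ∧ q a < p a ∧ p b < q b := by
    rcases lt_or_gt_of_ne ((hmem d).mp hd) with hlt | hlt
    · obtain ⟨a, ha, hpa⟩ := exists_lt_of_mapDomain_eq φ h.symm hlt
      exact ⟨a, d, ha, rfl, hpa, hlt⟩
    · obtain ⟨b, hb, hqb⟩ := exists_lt_of_mapDomain_eq φ h hlt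
      exact ⟨d, b, rfl, hb, hlt, hqb⟩
  obtain ⟨f, hf, hfa⟩ := exists_mem_minimalExcess_le hpa
  obtain ⟨g, hg, hgb⟩ := exists_mem_minimalExcess_le hqb
  have hfd : φ f = φ d := le_antisymm ((hφ hfa).trans_eq ha)
    (hmin f ((hmem f).mpr (mem_minimalExcess.mp hf).prop.ne'))
  have hgd : φ g = φ d := le_antisymm ((hφ hgb).trans_eq hb)
    (hmin g ((hmem g).mpr (mem_minimalExcess.mp hg).prop.ne))
  exact ⟨f, hf, g, hg, hfd.trans hgd.symm⟩

end Cancellation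

section FoxCalculus

variable {ι κ : Type*} [DecidableEq ι] [DecidableEq κ]

/-- The Fox derivative of a word with respect to the letter `x`, with every letter `a` evaluated
at the weight `ξ a`: each occurrence of `x` contributes the weight of the prefix before it. -/
def foxDeriv {R : Type*} [CommSemiring R] (ξ : ι → R) (x : ι) : List ι → R
  | [] => 0
  | a :: w => (if a = x then 1 else 0) + ξ a * foxDeriv ξ x w

section Semiring

variable {R S : Type*} [CommSemiring R] [CommSemiring S]

theorem foxDeriv_append (ξ : ι → R) (x : ι) (u v : List ι) :
    foxDeriv ξ x (u ++ v) = foxDeriv ξ x u + (u.map ξ).prod * foxDeriv ξ x v := by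
  induction u with
  | nil => simp [foxDeriv]
  | cons a u ih =>
    simp only [List.cons_append, foxDeriv, ih, List.map_cons, List.prod_cons]
    ring

theorem map_foxDeriv (f : R →+* S) (ξ : ι → R) (x : ι) (w : List ι) :
    f (foxDeriv ξ x w) = foxDeriv (f ∘ ξ) x w := by
  induction w with
  | nil => simp [foxDeriv]
  | cons a w ih => simp [foxDeriv, ih, apply_ite f]

theorem foxDeriv_one (x : ι) (w : List ι) : foxDeriv (1 : ι → R) x w = w.count x := by
  induction w with
  | nil => simp [foxDeriv]
  | cons a w ih => by_cases ha : a = x <;> simp [foxDeriv, ih, ha, add_comm]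

theorem foxDeriv_nonneg [PartialOrder R] [IsOrderedRing R] {ξ : ι → R} (hξ : 0 ≤ ξ) (x : ι)
    (w : List ι) : 0 ≤ foxDeriv ξ x w := by
  induction w with
  | nil => exact le_rfl
  | cons a w ih => exact add_nonneg (by split_ifs <;> simp) (mul_nonneg (hξ a) ih)

theorem foxDeriv_flatMap [Fintype ι] (η : κ → R) (t : κ) (α : ι → List κ) (w : List ι) :
    foxDeriv η t (w.flatMap α)
      = ∑ x, foxDeriv (fun z => ((α z).map η).prod) x w * foxDeriv η t (α x) := by
  induction w with
  | nil => simp [foxDeriv]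
  | cons a w ih =>
    simp only [List.flatMap_cons, foxDeriv_append, ih, foxDeriv, add_mul, Finset.sum_add_distrib,
      ite_mul, one_mul, zero_mul, Finset.sum_ite_eq, Finset.mem_univ, if_true, mul_assoc,
      Finset.mul_sum]

end Semiring

section Ring

open scoped Matrix

variable {R : Type*} [CommRing R]

/-- The row of the equation `e` in the linearised system: the Fox derivative of its left side minus
that of its right side, with respect to every unknown. -/
def foxRow (ξ : ι → R) (e : List ι × List ι) (x : ι) : R :=
  foxDeriv ξ x e.1 - foxDeriv ξ x e.2

/-- The Jacobian of the morphism `α`: the Fox derivatives of the images of the unknowns. -/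
def foxJacobian (η : κ → R) (α : ι → List κ) : Matrix ι κ R :=
  Matrix.of fun x t => foxDeriv η t (α x)

theorem foxRow_vecMul_foxJacobian [Fintype ι] (η : κ → R) (α : ι → List κ) (e : List ι × List ι)
    (t : κ) : (foxRow (fun z => ((α z).map η).prod) e ᵥ* foxJacobian η α) t
      = foxDeriv η t (e.1.flatMap α) - foxDeriv η t (e.2.flatMap α) := by
  simp only [foxDeriv_flatMap, ← Finset.sum_sub_distrib, ← sub_mul]
  rfl

end Ring

section Minors

variable {R S : Type*} [CommSemiring R] [CommSemiring S]

/-- The positive part of the minor of the rows of `e` and `e'` in the columns `x` and `y`. Swapping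
the sides of `e'` yields the negative part, so no subtraction is needed to say that the minor
vanishes. -/
def minorPos (ξ : ι → R) (e e' : List ι × List ι) (x y : ι) : R :=
  foxDeriv ξ x e.1 * foxDeriv ξ y e'.1 + foxDeriv ξ x e.2 * foxDeriv ξ y e'.2
    + (foxDeriv ξ y e.1 * foxDeriv ξ x e'.2 + foxDeriv ξ y e.2 * foxDeriv ξ x e'.1)

/-- The minor of the rows of `e` and `e'` in the columns `x` and `y` is zero. -/
def MinorVanishes (ξ : ι → R) (e e' : List ι × List ι) (x y : ι) : Prop :=
  minorPos ξ e e' x y = minorPos ξ e e'.swap x y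

theorem map_minorPos (f : R →+* S) (ξ : ι → R) (e e' : List ι × List ι) (x y : ι) :
    f (minorPos ξ e e' x y) = minorPos (f ∘ ξ) e e' x y := by
  simp only [minorPos, map_add, map_mul, map_foxDeriv]

theorem MinorVanishes.map {ξ : ι → R} {e e' : List ι × List ι} {x y : ι}
    (h : MinorVanishes ξ e e' x y) (f : R →+* S) : MinorVanishes (f ∘ ξ) e e' x y := by
  rw [MinorVanishes, ← map_minorPos, ← map_minorPos, h]

theorem MinorVanishes.of_map {f : R →+* S} (hf : Function.Injective f) {ξ : ι → R}
    {e e' : List ι × List ι} {x y : ι} (h : MinorVanishes (f ∘ ξ) e e' x y) :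
    MinorVanishes ξ e e' x y :=
  hf (by rw [map_minorPos, map_minorPos, h])

theorem minorVanishes_iff {R : Type*} [CommRing R] {ξ : ι → R} {e e' : List ι × List ι} {x y : ι} :
    MinorVanishes ξ e e' x y ↔ foxRow ξ e x * foxRow ξ e' y = foxRow ξ e y * foxRow ξ e' x := by
  rw [← sub_eq_zero, MinorVanishes, ← sub_eq_zero]
  simp only [minorPos, foxRow, Prod.fst_swap, Prod.snd_swap]
  ring_nf

end Minors

end FoxCalculus

section Transfer

open scoped Matrix

variable {ι β : Type*}

/-- The morphism `h`, given by the images of the unknowns, maps both sides of `e` to the same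
word. -/
def IsSolution (h : ι → List β) (e : List ι × List ι) : Prop :=
  e.1.flatMap h = e.2.flatMap h

section PowerWeights

variable [DecidableEq ι]

theorem eval_zero_foxDeriv_X_pow_pos (L : ι → ℕ) (x : ι) (w : List ι) :
    0 < (foxDeriv (fun z => (X : ℤ[X]) ^ L z) x (x :: w)).eval 0 := by
  rw [← coe_evalRingHom, map_foxDeriv]
  have hnonneg : 0 ≤ evalRingHom (0 : ℤ) ∘ fun z => (X : ℤ[X]) ^ L z := fun z => by
    simp only [Pi.zero_apply, Function.comp_apply, coe_evalRingHom, eval_pow, eval_X]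
    positivity
  simp only [foxDeriv, if_true]
  linarith [mul_nonneg (hnonneg x) (foxDeriv_nonneg hnonneg x w)]

theorem eval_zero_foxDeriv_X_pow_eq_zero {L : ι → ℕ} {a x : ι} (hax : a ≠ x) (ha : L a ≠ 0)
    (w : List ι) : (foxDeriv (fun z => (X : ℤ[X]) ^ L z) x (a :: w)).eval 0 = 0 := by
  simp [foxDeriv, hax, ha]

theorem eq_of_foxDeriv_X_pow_eq {L : ι → ℕ} (hL : ∀ x y, x ≠ y → L x ≠ 0 ∨ L y ≠ 0)
    {u v : List ι} (h : ∀ x, foxDeriv (fun z => (X : ℤ[X]) ^ L z) x u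
      = foxDeriv (fun z => (X : ℤ[X]) ^ L z) x v) : u = v := by
  induction u generalizing v with
  | nil =>
    cases v with
    | nil => rfl
    | cons b v =>
      have := eval_zero_foxDeriv_X_pow_pos L b v
      rw [← h b] at this
      simp [foxDeriv] at this
  | cons a u ih =>
    cases v with
    | nil =>
      have := eval_zero_foxDeriv_X_pow_pos L a u
      rw [h a] at this
      simp [foxDeriv] at this
    | cons b v =>
      obtain rfl | hab := eq_or_ne a b
      · rw [ih fun x => mul_left_cancel₀ (pow_ne_zero (L a) X_ne_zero) (add_left_cancel (h x))]
      exfalso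
      rcases hL a b hab with ha | hb
      · have := eval_zero_foxDeriv_X_pow_pos L b v
        rw [← h b, eval_zero_foxDeriv_X_pow_eq_zero hab ha] at this
        exact this.false
      · have := eval_zero_foxDeriv_X_pow_pos L a u
        rw [h a, eval_zero_foxDeriv_X_pow_eq_zero hab.symm hb] at this
        exact this.false

end PowerWeights

theorem IsSolution.foxRow_vecMul_foxJacobian_eq_zero [Fintype ι] [DecidableEq ι]
    [DecidableEq β] {R : Type*} [CommRing R] {α : ι → List β} {e : List ι × List ι}
    (he : IsSolution α e) (η : β → R) :
    foxRow (fun z => ((α z).map η).prod) e ᵥ* foxJacobian η α = 0 := by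
  funext t
  rw [foxRow_vecMul_foxJacobian, he, sub_self, Pi.zero_apply]

theorem isSolution_iff_foxRow_vecMul_eq_zero [Fintype ι] [DecidableEq ι] [DecidableEq β]
    {g : ι → List β} {e : List ι × List ι} :
    IsSolution g e ↔ foxRow (fun x => (X : ℤ[X]) ^ (g x).length) e
      ᵥ* foxJacobian (fun _ => X) g = 0 := by
  have hprod : (fun z => ((g z).map fun _ => (X : ℤ[X])).prod) = fun z => X ^ (g z).length := by
    simp
  have hrow (t : β) := foxRow_vecMul_foxJacobian (fun _ => (X : ℤ[X])) g e t
  rw [hprod] at hrow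
  constructor
  · intro h
    simpa only [hprod] using h.foxRow_vecMul_foxJacobian_eq_zero fun _ => (X : ℤ[X])
  · intro h
    refine eq_of_foxDeriv_X_pow_eq (L := fun _ => 1) (by simp) fun t => ?_
    simpa only [pow_one] using sub_eq_zero.mp ((hrow t).symm.trans (congrFun h t))

theorem IsSolution.of_minorVanishes [Finite ι] [DecidableEq ι] {g : ι → List β}
    {e e' : List ι × List ι} (he : IsSolution g e) (hne : e.1 ≠ e.2)
    (hg : ∀ x y, x ≠ y → g x ≠ [] ∨ g y ≠ [])
    (hminor : ∀ x y, MinorVanishes (fun x => (X : ℤ[X]) ^ (g x).length) e e' x y) :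
    IsSolution g e' := by
  classical
  have := Fintype.ofFinite ι
  obtain ⟨y, hy⟩ : ∃ y, foxRow (fun x => (X : ℤ[X]) ^ (g x).length) e y ≠ 0 := by
    contrapose! hne
    exact eq_of_foxDeriv_X_pow_eq (by simpa using hg) fun x => sub_eq_zero.mp (hne x)
  -- The row of `e'` is proportional to that of `e`.
  have hprop : foxRow (fun x => (X : ℤ[X]) ^ (g x).length) e y
        • foxRow (fun x => (X : ℤ[X]) ^ (g x).length) e'
      = foxRow (fun x => (X : ℤ[X]) ^ (g x).length) e' y
        • foxRow (fun x => (X : ℤ[X]) ^ (g x).length) e :=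
    funext fun x => (minorVanishes_iff.mp (hminor x y)).symm.trans (mul_comm _ _)
  rw [isSolution_iff_foxRow_vecMul_eq_zero] at he ⊢
  refine (smul_eq_zero.mp ?_).resolve_left hy
  rw [← Matrix.smul_vecMul, hprop, Matrix.smul_vecMul, he, smul_zero]

end Transfer

section Parikh

open scoped Matrix

variable {ι κ : Type*} [DecidableEq κ]

/-- The Parikh vector of a word: the number of occurrences of every letter. -/
def parikh (w : List κ) : κ → ℕ := fun t => w.count t

/-- The occurrence matrix of a morphism: row `x` is the Parikh vector of the image of `x`. -/
def occurrenceMatrix (α : ι → List κ) : Matrix ι κ ℚ :=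
  Matrix.of fun x t => (parikh (α x) t : ℚ)

/-- The letter `t` as a variable of the polynomial ring over `R` in commuting letters, which is
encoded as the monoid algebra on Parikh vectors. -/
noncomputable def letterWeight (R : Type*) [Semiring R] (t : κ) : AddMonoidAlgebra R (κ → ℕ) :=
  AddMonoidAlgebra.single (Pi.single t 1) 1

/-- The monomial of a word in commuting letters. -/
noncomputable def wordWeight (R : Type*) [Semiring R] (w : List κ) : AddMonoidAlgebra R (κ → ℕ) :=
  (w.map (letterWeight R)).prod

theorem parikh_cons (a : κ) (w : List κ) : parikh (a :: w) = Pi.single a 1 + parikh w := by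
  funext t
  by_cases hat : a = t
  · simp [parikh, hat, add_comm]
  · simp [parikh, hat]

theorem wordWeight_eq_single (R : Type*) [Semiring R] (w : List κ) :
    wordWeight R w = AddMonoidAlgebra.single (parikh w) 1 := by
  induction w with
  | nil => rfl
  | cons a w ih =>
    rw [wordWeight, List.map_cons, List.prod_cons, ← wordWeight, ih, letterWeight,
      AddMonoidAlgebra.single_mul_single, parikh_cons, one_mul]

theorem map_wordWeight {R A : Type*} [Semiring R] [Semiring A]
    (f : AddMonoidAlgebra R (κ → ℕ) →+* A) (w : List κ) :
    f (wordWeight R w) = (w.map (f ∘ letterWeight R)).prod := by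
  rw [wordWeight, map_list_prod, List.map_map]

theorem occurrenceMatrix_mulVec [Fintype κ] (α : ι → List κ) (c : κ → ℚ) (x : ι) :
    (occurrenceMatrix α *ᵥ c) x = ((α x).map c).sum := by
  calc (occurrenceMatrix α *ᵥ c) x = ∑ t, (α x).count t • c t := by
        simp only [nsmul_eq_mul]
        rfl
    _ = ∑ t ∈ (α x).toFinset, (α x).count t • c t :=
        (Finset.sum_subset (Finset.subset_univ _) fun t _ ht => by
          rw [List.count_eq_zero.mpr (List.mem_toFinset.not.mp ht), zero_smul]).symm
    _ = ((α x).map c).sum := (Finset.sum_list_map_count _ _).symm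

section Substitution

variable [Fintype κ] (R : Type*) [Semiring R]

/-- The substitution sending every commuting letter `t` to the monomial with exponent `c t`. -/
noncomputable def monomialSubst {A : Type*} [AddCommMonoid A] (c : κ → A) :
    AddMonoidAlgebra R (κ → ℕ) →+* AddMonoidAlgebra R A :=
  AddMonoidAlgebra.mapDomainRingHom R (Fintype.linearCombination ℕ c).toAddMonoidHom

theorem monomialSubst_letterWeight {A : Type*} [AddCommMonoid A] (c : κ → A) (t : κ) :
    monomialSubst R c (letterWeight R t) = AddMonoidAlgebra.single (c t) 1 := by
  simp [monomialSubst, letterWeight]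

theorem monomialSubst_wordWeight {A : Type*} [AddCommMonoid A] (c : κ → A) (w : List κ) :
    monomialSubst R c (wordWeight R w) = AddMonoidAlgebra.single (w.map c).sum 1 := by
  rw [map_wordWeight]
  induction w with
  | nil => rfl
  | cons a w ih => simp [ih, monomialSubst_letterWeight, AddMonoidAlgebra.single_mul_single]

end Substitution

section Vanishing

theorem foxJacobian_letterWeight_mulVec_injective [Finite ι] [Fintype κ] {α : ι → List κ}
    (hα : Function.Injective (occurrenceMatrix α).mulVec) :
    Function.Injective (foxJacobian (letterWeight ℤ) α).mulVec := by
  let augmentation : AddMonoidAlgebra ℤ (κ → ℕ) →+* ℚ :=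
    (AddMonoidAlgebra.lift ℤ ℚ (κ → ℕ) 1 : AddMonoidAlgebra ℤ (κ → ℕ) →ₐ[ℤ] ℚ)
  refine mulVec_injective_of_map augmentation ?_
  convert hα
  ext x t
  have hone : augmentation ∘ letterWeight ℤ = 1 := by
    funext s
    simp [augmentation, letterWeight]
  rw [Matrix.map_apply, foxJacobian, Matrix.of_apply, map_foxDeriv, hone, foxDeriv_one]
  rfl

variable [DecidableEq ι] {α : ι → List κ} {e e' : List ι × List ι} {x y : ι}

theorem minorVanishes_wordWeight_int [Fintype ι] [Fintype κ]
    (hα : Function.Injective (occurrenceMatrix α).mulVec)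
    (hcard : Fintype.card ι ≤ Fintype.card κ + 1) (he : IsSolution α e) (he' : IsSolution α e') :
    MinorVanishes (fun z => wordWeight ℤ (α z)) e e' x y :=
  minorVanishes_iff.mpr <| mul_eq_mul_of_vecMul_eq_zero
    (foxJacobian_letterWeight_mulVec_injective hα) hcard
    (he.foxRow_vecMul_foxJacobian_eq_zero _) (he'.foxRow_vecMul_foxJacobian_eq_zero _) x y

theorem minorVanishes_wordWeight_nat_iff_int :
    MinorVanishes (fun z => wordWeight ℕ (α z)) e e' x y
      ↔ MinorVanishes (fun z => wordWeight ℤ (α z)) e e' x y := by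
  let f := AddMonoidAlgebra.mapRingHom (κ → ℕ) (Nat.castRingHom ℤ)
  have hf : Function.Injective f :=
    AddMonoidAlgebra.map_injective (Nat.castRingHom ℤ : ℕ →+ ℤ) Nat.cast_injective
  have hcomp : (f ∘ fun z => wordWeight ℕ (α z)) = fun z => wordWeight ℤ (α z) := by
    funext z
    simp [f, wordWeight_eq_single]
  rw [← hcomp]
  exact ⟨fun h => h.map f, MinorVanishes.of_map hf⟩

/-- The weights of the images under `α` may be replaced by powers of `X` when the exponents arise
from the occurrence matrix of `α`, even with negative or fractional values on the letters. -/
theorem MinorVanishes.X_pow [Fintype κ] (h : MinorVanishes (fun z => wordWeight ℤ (α z)) e e' x y)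
    {L : ι → ℕ} {c : κ → ℚ} (hL : occurrenceMatrix α *ᵥ c = fun z => (L z : ℚ)) :
    MinorVanishes (fun z => (X : ℤ[X]) ^ L z) e e' x y := by
  let toRatPowers : ℤ[X] →+* AddMonoidAlgebra ℤ ℚ :=
    (AddMonoidAlgebra.mapDomainRingHom ℤ (Nat.castAddMonoidHom ℚ)).comp
      (toFinsuppIso ℤ : ℤ[X] →+* AddMonoidAlgebra ℤ ℕ)
  have hinj : Function.Injective toRatPowers :=
    (AddMonoidAlgebra.mapDomain_injective Nat.cast_injective).comp (toFinsuppIso ℤ).injective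
  refine MinorVanishes.of_map hinj ?_
  convert h.map (monomialSubst ℤ c) using 1
  funext z
  have hz : ((α z).map c).sum = L z := by rw [← occurrenceMatrix_mulVec, hL]
  simp [toRatPowers, monomialSubst_wordWeight, hz]

theorem MinorVanishes.X_pow_of_letterWeight [Finite ι]
    (h : MinorVanishes (letterWeight ℕ) e e' x y) (L : ι → ℕ) :
    MinorVanishes (fun z => (X : ℤ[X]) ^ L z) e e' x y := by
  have := Fintype.ofFinite ι
  have hletter : letterWeight ℕ = fun z : ι => wordWeight ℕ [z] := by
    funext z
    rw [wordWeight, List.map_singleton, List.prod_singleton]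
  rw [hletter, minorVanishes_wordWeight_nat_iff_int] at h
  exact h.X_pow (c := fun z => (L z : ℚ)) (by funext z; simp [occurrenceMatrix_mulVec])

end Vanishing

section Width

open scoped Finset

theorem widthLE_support_mul {E R : Type*} [AddCommMonoid E] [PartialOrder E] [IsOrderedAddMonoid E]
    [Semiring R] {p q : AddMonoidAlgebra R E} {N : ℕ} (hp : #p.coeff.support ≤ N)
    (hq : IsChain (· ≤ ·) (q.coeff.support : Set E)) : WidthLE (p * q).coeff.support N := by
  classical
  intro T hT hanti
  exact (card_le_card_of_isAntichain_subset_add hanti hq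
    (hT.trans (AddMonoidAlgebra.support_coeff_mul_subset p q))).trans hp

theorem WidthLE.support_add {E R : Type*} [PartialOrder E] [Semiring R]
    {p q : AddMonoidAlgebra R E} {N K : ℕ} (hp : WidthLE p.coeff.support N)
    (hq : WidthLE q.coeff.support K) : WidthLE (p + q).coeff.support (N + K) := by
  classical
  exact (hp.union hq).mono Finsupp.support_add

theorem card_support_foxDeriv_letterWeight_le (R : Type*) [CommSemiring R] (x : κ) (w : List κ) :
    #(foxDeriv (letterWeight R) x w).coeff.support ≤ w.count x := by
  classical
  induction w with
  | nil => simp [foxDeriv]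
  | cons a w ih =>
    rw [List.count_cons, add_comm]
    refine (Finset.card_le_card Finsupp.support_add).trans ((Finset.card_union_le _ _).trans
      (add_le_add ?_ ?_))
    · by_cases hax : a = x
      · simpa [hax] using Finset.card_le_card
          (AddMonoidAlgebra.support_coeff_one_subset (k := R) (G := κ → ℕ))
      · simp [hax]
    · exact (Finset.card_le_card (AddMonoidAlgebra.support_coeff_single_mul_subset _ _ _)).trans
        (Finset.card_image_le.trans ih)

theorem isChain_support_foxDeriv_letterWeight (R : Type*) [CommSemiring R] (x : κ) (w : List κ) :
    IsChain (· ≤ ·) ((foxDeriv (letterWeight R) x w).coeff.support : Set (κ → ℕ)) := by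
  classical
  induction w with
  | nil => simp [foxDeriv]
  | cons a w ih =>
    have hshift := ih.image_of_map_rel _ (· ≤ ·) (Pi.single a 1 + ·)
      fun _ _ h => add_le_add_right h _
    refine (hshift.insert fun b _ _ => Or.inl (zero_le (a := b))).mono fun b hb => ?_
    rcases Finset.mem_union.mp (Finsupp.support_add hb) with hb | hb
    · split_ifs at hb
      · exact Or.inl (Finset.mem_singleton.mp (AddMonoidAlgebra.support_coeff_one_subset hb))
      · simp at hb
    · refine Or.inr ?_
      simpa using AddMonoidAlgebra.support_coeff_single_mul_subset _ _ _ hb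

theorem widthLE_support_minorPos_letterWeight (R : Type*) [CommSemiring R] (e e' : List κ × List κ)
    (x y : κ) : WidthLE (minorPos (letterWeight R) e e' x y).coeff.support
      ((e.1 ++ e.2).count x + (e.1 ++ e.2).count y) := by
  have hwidth (z z' : κ) (w w' : List κ) : WidthLE (foxDeriv (letterWeight R) z w
      * foxDeriv (letterWeight R) z' w').coeff.support (w.count z) :=
    widthLE_support_mul (card_support_foxDeriv_letterWeight_le R z w)
      (isChain_support_foxDeriv_letterWeight R z' w')
  rw [List.count_append, List.count_append]
  exact ((hwidth x y _ _).support_add (hwidth x y _ _)).support_add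
    ((hwidth y x _ _).support_add (hwidth y x _ _))

end Width

end Parikh

section Factorization

open scoped Matrix

variable {ι κ β : Type*}

theorem flatMap_flatMap_eq {α : ι → List κ} {θ : κ → List β} {h : ι → List β}
    (hα : ∀ x, (α x).flatMap θ = h x) (w : List ι) : (w.flatMap α).flatMap θ = w.flatMap h := by
  rw [List.flatMap_assoc, funext hα]

theorem length_eq_occurrenceMatrix_mulVec [Fintype κ] [DecidableEq κ] {α : ι → List κ}
    {θ : κ → List β} {h : ι → List β} (hα : ∀ x, (α x).flatMap θ = h x) :
    (fun x => ((h x).length : ℚ)) = occurrenceMatrix α *ᵥ fun t => ((θ t).length : ℚ) := by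
  funext x
  rw [occurrenceMatrix_mulVec, ← hα x, List.length_flatMap, Nat.cast_list_sum, List.map_map]
  rfl

/-- `α` divides the morphism `h` on the left, and its occurrence matrix has full column rank. -/
def IsFullRankFactor [Fintype κ] [DecidableEq κ] (α : ι → List κ) (h : ι → List β) : Prop :=
  (∃ θ : κ → List β, ∀ x, (α x).flatMap θ = h x) ∧ Function.Injective (occurrenceMatrix α).mulVec

theorem injective_occurrenceMatrix_mulVec_iff [Fintype κ] [DecidableEq κ] {α : ι → List κ} :
    Function.Injective (occurrenceMatrix α).mulVec
      ↔ ∀ c : κ → ℚ, (∀ x, ((α x).map c).sum = 0) → c = 0 := by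
  simp only [← occurrenceMatrix_mulVec]
  rw [← Matrix.coe_mulVecLin, injective_iff_map_eq_zero]
  simp only [Matrix.mulVecLin_apply, funext_iff, Pi.zero_apply]

theorem exists_isFullRankFactor_of_redundant {k : ℕ} {h : Fin (k + 1) → List β} (a : Fin (k + 1))
    (w : List (Fin k)) (hw : w.flatMap (h ∘ a.succAbove) = h a) :
    ∃ α : Fin (k + 1) → List (Fin k), IsFullRankFactor α h := by
  refine ⟨a.insertNth (α := fun _ => List (Fin k)) w fun t => [t], ⟨h ∘ a.succAbove, ?_⟩, ?_⟩
  · exact (Fin.forall_iff_succAbove a).mpr ⟨by simpa using hw, by simp⟩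
  · exact injective_occurrenceMatrix_mulVec_iff.mpr fun c hc => funext fun t => by
      simpa using hc (a.succAbove t)

section Splitting

variable [DecidableEq ι] {a b : ι}

/-- The elementary morphism `a ↦ b a`, fixing all other letters. -/
def leftInsert (a b : ι) : ι → List ι := Function.update (fun z => [z]) a [b, a]

theorem leftInsert_self (a b : ι) : leftInsert a b a = [b, a] := Function.update_self ..

theorem leftInsert_of_ne {z : ι} (hz : z ≠ a) : leftInsert a b z = [z] :=
  Function.update_of_ne hz ..

theorem leftInsert_flatMap_update {h : ι → List β} {s : List β} (hab : a ≠ b)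
    (hs : h a = h b ++ s) (z : ι) : (leftInsert a b z).flatMap (Function.update h a s) = h z := by
  obtain rfl | hz := eq_or_ne z a
  · simp [leftInsert_self, hab.symm, hs]
  · simp [leftInsert_of_ne hz, hz]

theorem flatMap_leftInsert_cons_ne (hab : a ≠ b) (u v : List ι) :
    (a :: u).flatMap (leftInsert a b) ≠ (b :: v).flatMap (leftInsert a b) := by
  intro h
  simp only [List.flatMap_cons, leftInsert_self, leftInsert_of_ne hab.symm, List.cons_append,
    List.nil_append, List.cons.injEq, true_and] at h
  cases v with
  | nil => simp at h
  | cons z v =>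
    obtain rfl | hz := eq_or_ne z a
    · simp [leftInsert_self, hab] at h
    · simp [leftInsert_of_ne hz, hz.symm] at h

theorem IsFullRankFactor.comp_leftInsert [Fintype κ] [DecidableEq κ] {α : ι → List κ}
    {h : ι → List β} {s : List β} (hab : a ≠ b) (hs : h a = h b ++ s)
    (hα : IsFullRankFactor α (Function.update h a s)) :
    IsFullRankFactor (fun z => (leftInsert a b z).flatMap α) h := by
  obtain ⟨⟨θ, hθ⟩, hinj⟩ := hα
  refine ⟨⟨θ, fun z => ?_⟩, ?_⟩
  · rw [flatMap_flatMap_eq hθ, leftInsert_flatMap_update hab hs]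
  · rw [injective_occurrenceMatrix_mulVec_iff] at hinj ⊢
    intro c hc
    have hne : ∀ z, z ≠ a → ((α z).map c).sum = 0 := fun z hz => by
      simpa [leftInsert_of_ne hz] using hc z
    refine hinj c fun z => ?_
    obtain rfl | hz := eq_or_ne z a
    · simpa [leftInsert_self, hne b hab.symm] using hc z
    · exact hne z hz

end Splitting

theorem exists_cons_flatMap_eq {h : ι → List β} (hh : ∀ x, h x ≠ []) {u v : List ι} (huv : u ≠ v)
    (heq : u.flatMap h = v.flatMap h) :
    ∃ a b u' v', a ≠ b ∧ h b <+: h a ∧ (a :: u').flatMap h = (b :: v').flatMap h := by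
  induction u generalizing v with
  | nil =>
    cases v with
    | nil => exact absurd rfl huv
    | cons b v => simp [hh b] at heq
  | cons a u ih =>
    cases v with
    | nil => simp [hh a] at heq
    | cons b v =>
      obtain rfl | hab := eq_or_ne a b
      · simp only [List.flatMap_cons, List.append_cancel_left_eq] at heq
        exact ih (fun h => huv (by rw [h])) heq
      · have ha : h a <+: (b :: v).flatMap h := heq ▸ List.prefix_append _ _
        have hb : h b <+: (b :: v).flatMap h := List.prefix_append _ _
        rcases List.prefix_or_prefix_of_prefix ha hb with hab' | hba
        · exact ⟨b, a, v, u, hab.symm, hab', heq.symm⟩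
        · exact ⟨a, b, u, v, hab, hba, heq⟩

/-- Nielsen-type descent: a common prefix is split off until some image becomes empty. -/
theorem exists_isFullRankFactor {k : ℕ} {h : Fin (k + 1) → List β}
    {u v : List (Fin (k + 1))} (huv : u ≠ v) (heq : u.flatMap h = v.flatMap h) :
    ∃ α : Fin (k + 1) → List (Fin k), IsFullRankFactor α h := by
  induction hN : ∑ x, (h x).length using Nat.strong_induction_on generalizing h u v with
  | _ N ih =>
    by_cases hnil : ∃ a, h a = []
    · obtain ⟨a, ha⟩ := hnil
      exact exists_isFullRankFactor_of_redundant a [] ha.symm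
    push Not at hnil
    obtain ⟨a, b, u', v', hab, ⟨s, hs⟩, heq'⟩ := exists_cons_flatMap_eq hnil huv heq
    have hupdate := leftInsert_flatMap_update hab hs.symm
    have hlength : ∑ x, (Function.update h a s x).length < N := by
      rw [← hN]
      refine Finset.sum_lt_sum (fun x _ => ?_) ⟨a, Finset.mem_univ a, ?_⟩
      · obtain rfl | hx := eq_or_ne x a
        · simp [← hs]
        · rw [Function.update_of_ne hx]
      · simp [← hs, List.length_pos_iff.mpr (hnil b)]
    obtain ⟨α, hα⟩ := ih _ hlength (flatMap_leftInsert_cons_ne hab u' v')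
      (by rw [flatMap_flatMap_eq hupdate, flatMap_flatMap_eq hupdate, heq']) rfl
    exact ⟨_, hα.comp_leftInsert hab hs.symm⟩

end Factorization

section Rank

variable {ι β : Type*}

/-- The images of `h` are products of words from a list of `k` words, i.e. the combinatorial rank of
`h` is at most `k`. -/
def RankLE (h : ι → List β) (k : ℕ) : Prop :=
  ∃ (α : ι → List (Fin k)) (θ : Fin k → List β), ∀ x, (α x).flatMap θ = h x

theorem mRank_le_of_rankLE {n k : ℕ} {h : Fin n → List ℕ} (hh : RankLE h k) : mRank h ≤ k := by
  obtain ⟨α, θ, hθ⟩ := hh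
  have hcard : (Finset.univ.image θ).card ≤ k := Finset.card_image_le.trans_eq (Finset.card_fin k)
  refine le_trans (Nat.sInf_le ⟨Finset.univ.image θ, rfl, fun x => ?_⟩) hcard
  exact ⟨(α x).map θ, by simp, by rw [← List.flatMap_def, hθ x]⟩

theorem IsSolution.of_rank_le {k : ℕ} {h : ι → List β} (hrank : ∀ j, RankLE h j → k ≤ j)
    {α : ι → List (Fin k)} {θ : Fin k → List β} (hθ : ∀ x, (α x).flatMap θ = h x)
    {e : List ι × List ι} (he : IsSolution h e) : IsSolution α e := by
  by_contra hne
  rw [IsSolution, ← flatMap_flatMap_eq hθ, ← flatMap_flatMap_eq hθ] at he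
  cases k with
  | zero => exact hne (Subsingleton.elim _ _)
  | succ k =>
    obtain ⟨γ, ⟨τ, hτ⟩, -⟩ := exists_isFullRankFactor hne he
    have := hrank k ⟨fun x => (α x).flatMap γ, τ, fun x => by rw [flatMap_flatMap_eq hτ, hθ]⟩
    omega

theorem ne_nil_or_ne_nil_of_rank {k : ℕ} {h : Fin (k + 1) → List β}
    (hrank : ∀ j, RankLE h j → k ≤ j) {x y : Fin (k + 1)} (hxy : x ≠ y) : h x ≠ [] ∨ h y ≠ [] := by
  by_contra! hnil
  obtain ⟨t, rfl⟩ := Fin.exists_succAbove_eq hxy.symm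
  cases k with
  | zero => exact t.elim0
  | succ k =>
    obtain ⟨α, ⟨θ, hθ⟩, -⟩ :=
      exists_isFullRankFactor_of_redundant (h := h ∘ x.succAbove) t [] hnil.2.symm
    have hle := hrank k ⟨x.insertNth (α := fun _ => List (Fin k)) [] α, θ,
      (Fin.forall_iff_succAbove x).mpr ⟨by simp [hnil.1], by simpa using hθ⟩⟩
    omega

end Rank

section LengthRelations

open scoped Finset Matrix

variable {k : ℕ} {β : Type*} {e e' : List (Fin (k + 1)) × List (Fin (k + 1))} {x y : Fin (k + 1)}

/-- `d` annihilates the occurrence matrix of some full rank factor of `h`. The length types of all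
morphisms with that left factor then satisfy the linear relation `d`. -/
def IsLengthRelation (h : Fin (k + 1) → List β) (d : Fin (k + 1) → ℚ) : Prop :=
  ∃ α : Fin (k + 1) → List (Fin k), IsFullRankFactor α h ∧ d ᵥ* occurrenceMatrix α = 0

theorem natCast_sub_vecMul_occurrenceMatrix_eq_zero {ι κ : Type*} [Fintype ι] [DecidableEq κ]
    {α : ι → List κ} {f g : ι → ℕ} (hfg : Fintype.linearCombination ℕ (fun z => parikh (α z)) f
      = Fintype.linearCombination ℕ (fun z => parikh (α z)) g) :
    (fun z => (f z - g z : ℚ)) ᵥ* occurrenceMatrix α = 0 := by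
  funext t
  have hcast := congrArg (Nat.cast (R := ℚ)) (congrFun hfg t)
  simp only [Fintype.linearCombination_apply, Finset.sum_apply, Pi.smul_apply, smul_eq_mul,
    Nat.cast_sum, Nat.cast_mul] at hcast
  simp only [Matrix.vecMul, dotProduct, occurrenceMatrix, Matrix.of_apply, sub_mul,
    Finset.sum_sub_distrib, hcast, sub_self, Pi.zero_apply]

theorem exists_minimalExcess_isLengthRelation {h : Fin (k + 1) → List β}
    (hrank : ∀ j, RankLE h j → k ≤ j) (hne : e.1 ≠ e.2) (he : IsSolution h e)
    (he' : IsSolution h e') (hminor : ¬ MinorVanishes (letterWeight ℕ) e e' x y) :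
    ∃ f ∈ minimalExcess (minorPos (letterWeight ℕ) e e' x y).coeff
        (minorPos (letterWeight ℕ) e e'.swap x y).coeff,
      ∃ g ∈ minimalExcess (minorPos (letterWeight ℕ) e e'.swap x y).coeff
        (minorPos (letterWeight ℕ) e e' x y).coeff,
        IsLengthRelation h fun z => (f z - g z : ℚ) := by
  obtain ⟨α, hα⟩ := exists_isFullRankFactor hne he
  obtain ⟨θ, hθ⟩ := hα.1
  let collect := Fintype.linearCombination ℕ fun z => parikh (α z)
  have hmono : Monotone (toLex ∘ collect) := by
    refine Pi.toLex_monotone.comp fun f g hfg => ?_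
    simp only [collect, Fintype.linearCombination_apply]
    gcongr with z
    exact hfg z
  have hvanish : MinorVanishes (fun z => wordWeight ℕ (α z)) e e' x y :=
    minorVanishes_wordWeight_nat_iff_int.mpr <| minorVanishes_wordWeight_int hα.2 (by simp)
      (he.of_rank_le hrank hθ) (he'.of_rank_le hrank hθ)
  have hcollect : (monomialSubst ℕ fun z => parikh (α z)) ∘ letterWeight ℕ
      = fun z => wordWeight ℕ (α z) := by
    funext z
    rw [Function.comp_apply, monomialSubst_letterWeight, wordWeight_eq_single]
  rw [← hcollect, MinorVanishes, ← map_minorPos, ← map_minorPos] at hvanish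
  obtain ⟨f, hf, g, hg, hfg⟩ := exists_minimalExcess_map_eq hmono
    (mt (fun h => AddMonoidAlgebra.ext h) hminor) (by
      rw [Finsupp.mapDomain_comp, Finsupp.mapDomain_comp]
      exact congrArg (Finsupp.mapDomain toLex) (congrArg AddMonoidAlgebra.coeff hvanish))
  exact ⟨f, hf, g, hg, α, hα, natCast_sub_vecMul_occurrenceMatrix_eq_zero (toLex.injective hfg)⟩

theorem IsSolution.of_common_isLengthRelation {h h' : Fin (k + 1) → List β}
    (hrank : ∀ j, RankLE h j → k ≤ j) (hrank' : ∀ j, RankLE h' j → k ≤ j) {d : Fin (k + 1) → ℚ}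
    (hd : d ≠ 0) (hhd : IsLengthRelation h d) (hhd' : IsLengthRelation h' d) (hne : e.1 ≠ e.2)
    (he : IsSolution h e) (heh' : IsSolution h' e) (he' : IsSolution h' e') :
    IsSolution h e' := by
  obtain ⟨α, ⟨⟨θ, hθ⟩, hα⟩, hdα⟩ := hhd
  obtain ⟨α', ⟨⟨θ', hθ'⟩, hα'⟩, hdα'⟩ := hhd'
  have hlength : (fun z => ((h z).length : ℚ)) ∈ Set.range (occurrenceMatrix α').mulVec := by
    rw [mem_range_mulVec_iff hα' (by simp) hd hdα', ← mem_range_mulVec_iff hα (by simp) hd hdα]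
    exact ⟨_, (length_eq_occurrenceMatrix_mulVec hθ).symm⟩
  obtain ⟨c, hc⟩ := hlength
  refine he.of_minorVanishes hne (fun _ _ => ne_nil_or_ne_nil_of_rank hrank) fun x y => ?_
  exact (minorVanishes_wordWeight_int hα' (by simp) (heh'.of_rank_le hrank' hθ')
    (he'.of_rank_le hrank' hθ')).X_pow hc

theorem card_le_sq_of_separated_solutions {τ : Type*} [LinearOrder τ] {s : Finset τ}
    {h : τ → Fin (k + 1) → List β} (hrank : ∀ i ∈ s, ∀ j, RankLE (h i) j → k ≤ j)
    (hne : e.1 ≠ e.2) (he : ∀ i ∈ s, IsSolution (h i) e) (he' : ∀ i ∈ s, IsSolution (h i) e')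
    (hminor : ¬ MinorVanishes (letterWeight ℕ) e e' x y)
    (hsep : ∀ i ∈ s, ∀ j ∈ s, i < j → ∃ e'', IsSolution (h j) e'' ∧ ¬ IsSolution (h i) e'') :
    #s ≤ ((e.1 ++ e.2).count x + (e.1 ++ e.2).count y) ^ 2 := by
  choose! f hf g hg hrel using fun i hi =>
    exists_minimalExcess_isLengthRelation (hrank i hi) hne (he i hi) (he' i hi) hminor
  have hlt : ∀ i ∈ s, ∀ j ∈ s, i < j → (f i, g i) ≠ (f j, g j) := by
    rintro i hi j hj hij hpair
    obtain ⟨hfij, hgij⟩ := Prod.mk.inj hpair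
    obtain ⟨e'', hej, hei⟩ := hsep i hi j hj hij
    have hd : (fun z => (f i z - g i z : ℚ)) ≠ 0 := by
      intro hzero
      have hfg : f i = g i := funext fun z => by
        exact_mod_cast sub_eq_zero.mp (congrFun hzero z)
      have hf' := (mem_minimalExcess.mp (hf i hi)).prop
      have hg' := (mem_minimalExcess.mp (hg i hi)).prop
      rw [← hfg] at hg'
      exact hf'.asymm hg'
    exact hei (IsSolution.of_common_isLengthRelation (hrank i hi) (hrank j hj) hd (hrel i hi)
      (by rw [hfij, hgij]; exact hrel j hj) hne (he i hi) (he j hj) hej)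
  have hinj : Set.InjOn (fun i => (f i, g i)) s := fun i hi j hj hpair => by
    rcases lt_trichotomy i j with hij | rfl | hji
    exacts [absurd hpair (hlt i hi j hj hij), rfl, absurd hpair.symm (hlt j hj i hi hji)]
  refine (Finset.card_le_card_of_injOn _
    (fun i hi => Finset.mem_product.mpr ⟨hf i hi, hg i hi⟩) hinj).trans ?_
  rw [Finset.card_product, sq]
  exact Nat.mul_le_mul
    ((widthLE_support_minorPos_letterWeight ℕ e e' x y).card_minimalExcess_le _)
    ((widthLE_support_minorPos_letterWeight ℕ e e'.swap x y).card_minimalExcess_le _)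

end LengthRelations

section Chains

theorem exists_not_of_strict_chain {σ : Type*} {m : ℕ} {S : Set σ} {P : Fin m → σ → Prop}
    (hchain : ∀ k : ℕ, 1 ≤ k → k < m →
      {s | s ∈ S ∧ ∀ i : Fin m, (i : ℕ) < k + 1 → P i s}
        ⊂ {s | s ∈ S ∧ ∀ i : Fin m, (i : ℕ) < k → P i s})
    (hne : {s | s ∈ S ∧ ∀ i : Fin m, P i s}.Nonempty) {j : ℕ} (hj : 1 ≤ j) :
    ∃ s ∈ S, (∀ i : Fin m, (i : ℕ) < j → P i s) ∧ ∀ hjm : j < m, ¬ P ⟨j, hjm⟩ s := by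
  rcases lt_or_ge j m with hjm | hmj
  · obtain ⟨s, ⟨hs, hlt⟩, hnot⟩ := Set.exists_of_ssubset (hchain j hj hjm)
    refine ⟨s, hs, hlt, fun _ hP => hnot ⟨hs, fun i hi => ?_⟩⟩
    obtain hi | hi := Nat.lt_succ_iff_lt_or_eq.mp hi
    · exact hlt i hi
    · obtain rfl : i = ⟨j, hjm⟩ := Fin.ext hi
      exact hP
  · obtain ⟨s, hs, hall⟩ := hne
    exact ⟨s, hs, fun i _ => hall i, fun hjm => absurd hjm hmj.not_gt⟩

theorem chain_length_quadratic_bound_general {n m : ℕ} {β : Type*} (S : Set (Fin n → List β))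
    (hrank : ∀ h ∈ S, ∀ k, RankLE h k → n ≤ k + 1) (hm : 0 < m)
    (eqs : Fin m → List (Fin n) × List (Fin n)) (hnt : (eqs ⟨0, hm⟩).1 ≠ (eqs ⟨0, hm⟩).2)
    (hchain : ∀ k : ℕ, 1 ≤ k → k < m →
      {h | h ∈ S ∧ ∀ i : Fin m, (i : ℕ) < k + 1 → IsSolution h (eqs i)}
        ⊂ {h | h ∈ S ∧ ∀ i : Fin m, (i : ℕ) < k → IsSolution h (eqs i)})
    (hne : {h | h ∈ S ∧ ∀ i : Fin m, IsSolution h (eqs i)}.Nonempty) :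
    ∃ x y : Fin n,
      m ≤ (((eqs ⟨0, hm⟩).1 ++ (eqs ⟨0, hm⟩).2).count x
            + ((eqs ⟨0, hm⟩).1 ++ (eqs ⟨0, hm⟩).2).count y) ^ 2 + 1 := by
  obtain ⟨k, rfl⟩ : ∃ k, n = k + 1 := Nat.exists_eq_succ_of_ne_zero (by
    rintro rfl
    exact hnt (Subsingleton.elim _ _))
  simp only [Nat.add_le_add_iff_right] at hrank
  obtain hm1 | hm2 := lt_or_ge m 2
  · exact ⟨0, 0, by omega⟩
  choose! h hS hsol hnot using fun j (hj : 1 ≤ j) => exists_not_of_strict_chain hchain hne hj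
  have hsol₀ (j : ℕ) (hj : 1 ≤ j) : IsSolution (h j) (eqs ⟨0, hm⟩) := hsol j hj _ hj
  obtain ⟨x, y, hxy⟩ :
      ∃ x y, ¬ MinorVanishes (letterWeight ℕ) (eqs ⟨0, hm⟩) (eqs ⟨1, hm2⟩) x y := by
    by_contra! hvanish
    exact hnot 1 le_rfl hm2 <| (hsol₀ 1 le_rfl).of_minorVanishes hnt
      (fun _ _ => ne_nil_or_ne_nil_of_rank (hrank _ (hS 1 le_rfl)))
      fun x y => (hvanish x y).X_pow_of_letterWeight _
  have hIcc {j : ℕ} (hj : j ∈ Finset.Icc 2 m) : 1 ≤ j := one_le_two.trans (Finset.mem_Icc.mp hj).1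
  have hcard := card_le_sq_of_separated_solutions (s := Finset.Icc 2 m)
    (fun j hj => hrank _ (hS j (hIcc hj))) hnt (fun j hj => hsol₀ j (hIcc hj))
    (fun j hj => hsol j (hIcc hj) ⟨1, hm2⟩ (Finset.mem_Icc.mp hj).1) hxy fun i hi j hj hij =>
      have him : i < m := hij.trans_le (Finset.mem_Icc.mp hj).2
      ⟨eqs ⟨i, him⟩, hsol j (hIcc hj) _ hij, hnot i (hIcc hi) him⟩
  rw [Nat.card_Icc] at hcard
  exact ⟨x, y, by omega⟩

end Chains

/-- Let `E₁, …, E_m` be nontrivial equations on `n` unknowns with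
`Sol_{n−1}(E₁) ⊋ Sol_{n−1}(E₁,E₂) ⊋ ⋯ ⊋ Sol_{n−1}(E₁,…,E_m) ≠ ∅`. Then there are two
unknowns `x, y` such that `m ≤ (|E₁|_x + |E₁|_y)² + 1`. -/
theorem chain_length_quadratic_bound {n m : ℕ}
    (A : Finset ℕ) (hA : ∀ a ∈ A, 0 < a)
    (hm : 0 < m)
    (eqs : Fin m → List (Fin n) × List (Fin n))
    (hnt : ∀ i, (eqs i).1 ≠ (eqs i).2)
    (hchain : ∀ k : ℕ, 1 ≤ k → k < m →
      {h : Fin n → List ℕ | IntoAlph A h ∧ mRank h = n - 1 ∧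
          ∀ i : Fin m, (i : ℕ) < k + 1 → mApply h (eqs i).1 = mApply h (eqs i).2}
        ⊂ {h : Fin n → List ℕ | IntoAlph A h ∧ mRank h = n - 1 ∧
            ∀ i : Fin m, (i : ℕ) < k → mApply h (eqs i).1 = mApply h (eqs i).2})
    (hne : {h : Fin n → List ℕ | IntoAlph A h ∧ mRank h = n - 1 ∧
        ∀ i : Fin m, mApply h (eqs i).1 = mApply h (eqs i).2}.Nonempty) :
    ∃ x y : Fin n,
      m ≤ (((eqs ⟨0, hm⟩).1 ++ (eqs ⟨0, hm⟩).2).count x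
            + ((eqs ⟨0, hm⟩).1 ++ (eqs ⟨0, hm⟩).2).count y) ^ 2 + 1 := by
  refine chain_length_quadratic_bound_general {h | IntoAlph A h ∧ mRank h = n - 1}
    (fun h hh k hk => ?_) hm eqs (hnt _) ?_ ?_
  · exact Nat.sub_le_iff_le_add.mp (hh.2.symm.trans_le (mRank_le_of_rankLE hk))
  · simpa only [Set.mem_ofPred_eq, and_assoc, IsSolution, List.flatMap_def, mApply] using hchain
  · simpa only [Set.mem_ofPred_eq, and_assoc, IsSolution, List.flatMap_def, mApply] using hne
end

section
/- Let E₁, …, E_m be an independent system of word equations on three unknowns that has a nonperiodic common solution. Then there exist two unknowns x, y ∈ Ξ such that m ≤ (|E₁|_x + |E₁|_y)² + 1. -/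
open Polynomial

/-!
By the defect theorem, a nonperiodic solution of a nontrivial equation in three unknowns factors
through words over two letters, so we may work with binary morphisms `η` whose letter counts are
linearly independent. Fox derivatives turn "`η` solves `E`" into an orthogonality condition: the row
of Fox derivatives of `E`, specialised along `η`, is orthogonal to the two independent vectors of
Fox derivatives of the words `η c`. In three dimensions the rows of two equations solved by `η` are
therefore parallel, i.e. their `2 × 2` minors vanish after specialisation; conversely, a solution of
`E` also solves every equation whose row is parallel to the row of `E`, if the latter is nonzero.

Whether a specialised polynomial vanishes depends only on which exponents `η` identifies, hence on
the line of integer relations between its letter counts. So in an independent system the solutions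
witnessing independence have different lines. On the other hand, if a nonzero minor vanishes along
`η`, then `η` identifies a minimal exponent of positive coefficient with a minimal exponent of
negative coefficient, which determines the line. The prefixes of a word form a chain, so the
positive and the negative part of the minor in columns `x, y` are sums of `|E|_x + |E|_y` chains of
monomials, and there are at most `(|E|_x + |E|_y)²` such pairs.

This needs a nonerasing witness and balanced equations. If all witnesses erase an unknown, then
their lines are coordinate axes. An unbalanced equation `u = v` fixes the line by its letter counts
`|u|_c - |v|_c`, so it is the only equation of the system; if all equations are balanced, then
periodic morphisms solve every equation, so no witness is periodic.
-/

/-- A word equation `u = v` in `n` unknowns, encoded as the pair `(u, v)`. -/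
abbrev WordEquation (n : ℕ) : Type := List (Fin n) × List (Fin n)

namespace WordEquation

open scoped Matrix

variable {n k : ℕ} {α : Type*}

/-! ### Morphisms and the defect theorem -/

/-- The morphism `h` is a solution of the word equation `E`. -/
def Solves (h : Fin n → List α) (E : WordEquation n) : Prop :=
  mApply h E.1 = mApply h E.2

/-- Periodic morphisms: all images are powers of one word `r`. This is the condition `rank ≤ 1`,
stated over an arbitrary alphabet. -/
def IsPeriodic (h : Fin n → List α) : Prop :=
  ∃ r : List α, ∀ c, ∃ e : ℕ, h c = (List.replicate e r).flatten

/-- The number of occurrences of the letter `a` in the images of the unknowns, as a vector indexed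
by the unknowns. -/
def letterCount (η : Fin n → List (Fin k)) (a : Fin k) : Fin n → ℤ :=
  fun c => (η c).count a

theorem mApply_nil (h : Fin n → List α) : mApply h [] = [] := rfl

theorem mApply_cons (h : Fin n → List α) (c : Fin n) (w : List (Fin n)) :
    mApply h (c :: w) = h c ++ mApply h w := by
  simp [mApply]

theorem mApply_append (h : Fin n → List α) (u v : List (Fin n)) :
    mApply h (u ++ v) = mApply h u ++ mApply h v := by
  simp [mApply]

theorem mApply_mApply (θ : Fin k → List α) (η : Fin n → List (Fin k)) (w : List (Fin n)) :
    mApply θ (mApply η w) = mApply (fun c => mApply θ (η c)) w := by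
  induction w with
  | nil => rfl
  | cons c w ih => rw [mApply_cons, mApply_cons, mApply_append, ih]

theorem countP_mApply (h : Fin n → List α) (p : α → Bool) (w : List (Fin n)) :
    (mApply h w).countP p = ∑ c, w.count c * (h c).countP p := by
  induction w with
  | nil => simp [mApply_nil]
  | cons a w ih =>
    rw [mApply_cons, List.countP_append, ih]
    simp [List.count_cons, add_mul, Finset.sum_add_distrib, add_comm]

theorem exists_mApply_cons_eq_of_ne {h : Fin n → List α} (hne : ∀ c, h c ≠ []) {u v : List (Fin n)}
    (huv : u ≠ v) (he : mApply h u = mApply h v) :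
    ∃ s t u' v', s ≠ t ∧ mApply h (s :: u') = mApply h (t :: v') := by
  induction u generalizing v with
  | nil =>
    obtain _ | ⟨t, v⟩ := v
    · exact absurd rfl huv
    · rw [mApply_nil, mApply_cons] at he
      exact absurd (List.append_eq_nil_iff.1 he.symm).1 (hne t)
  | cons s u ih =>
    obtain _ | ⟨t, v⟩ := v
    · rw [mApply_nil, mApply_cons] at he
      exact absurd (List.append_eq_nil_iff.1 he).1 (hne s)
    · obtain rfl | hst := eq_or_ne s t
      · rw [mApply_cons, mApply_cons] at he
        exact ih (fun h => huv (h ▸ rfl)) (List.append_cancel_left he)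
      · exact ⟨s, t, u, v, hst, he⟩

/-- The elementary substitution `t ↦ st`, which fixes the other unknowns. -/
def elemSubst (s t : Fin n) : Fin n → List (Fin n) :=
  Function.update (fun c => [c]) t [s, t]

theorem mApply_update_elemSubst {h : Fin n → List α} {s t : Fin n} {w : List α} (hst : s ≠ t)
    (hw : h t = h s ++ w) (u : List (Fin n)) :
    mApply (Function.update h t w) (mApply (elemSubst s t) u) = mApply h u := by
  rw [mApply_mApply]
  congr 1
  ext1 c
  obtain rfl | hc := eq_or_ne c t
  · simp [elemSubst, mApply, hw, hst]
  · simp [elemSubst, mApply, hc]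

theorem mApply_elemSubst_ne_cons {s t : Fin n} (hst : s ≠ t) (u v : List (Fin n)) :
    mApply (elemSubst s t) u ≠ t :: v := by
  cases u with
  | nil => simp [mApply_nil]
  | cons c u =>
    obtain rfl | hc := eq_or_ne c t
    · simp [mApply_cons, elemSubst, hst]
    · simp [mApply_cons, elemSubst, hc]

theorem exists_solves_update_of_append {h : Fin n → List α} {s t : Fin n} {u v : List (Fin n)}
    {w : List α} (hst : s ≠ t) (he : mApply h (s :: u) = mApply h (t :: v))
    (hw : h t = h s ++ w) :
    ∃ E : WordEquation n, E.1 ≠ E.2 ∧ Solves (Function.update h t w) E := by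
  refine ⟨(mApply (elemSubst s t) u, t :: mApply (elemSubst s t) v),
    mApply_elemSubst_ne_cons hst _ _, ?_⟩
  rw [mApply_cons, mApply_cons, hw, List.append_assoc] at he
  rw [Solves, mApply_cons, mApply_update_elemSubst hst hw, mApply_update_elemSubst hst hw,
    Function.update_self]
  exact List.append_cancel_left he

theorem exists_solves_update {h : Fin n → List α} (hne : ∀ c, h c ≠ []) {E : WordEquation n}
    (hE : E.1 ≠ E.2) (hs : Solves h E) :
    ∃ s t w, s ≠ t ∧ h t = h s ++ w ∧
      ∃ E' : WordEquation n, E'.1 ≠ E'.2 ∧ Solves (Function.update h t w) E' := by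
  obtain ⟨s, t, u, v, hst, he⟩ := exists_mApply_cons_eq_of_ne hne hE hs
  have hsplit := he
  rw [mApply_cons, mApply_cons] at hsplit
  rcases List.append_eq_append_iff.1 hsplit with ⟨w, hw, -⟩ | ⟨w, hw, -⟩
  · exact ⟨s, t, w, hst, hw, exists_solves_update_of_append hst he hw⟩
  · exact ⟨t, s, w, hst.symm, hw, exists_solves_update_of_append hst.symm he.symm hw⟩

theorem sum_length_update_lt {h : Fin n → List α} {s t : Fin n} {w : List α} (hs : h s ≠ [])
    (hw : h t = h s ++ w) :
    ∑ c, (Function.update h t w c).length < ∑ c, (h c).length := by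
  have hpos := List.length_pos_iff.2 hs
  refine Finset.sum_lt_sum (fun c _ => ?_) ⟨t, Finset.mem_univ t, by simp [hw, hpos]⟩
  obtain rfl | hc := eq_or_ne c t
  · simp [hw]
  · simp [hc]

theorem linearIndependent_letterCount_update {η : Fin n → List (Fin k)} {s t : Fin n}
    (hst : s ≠ t) (hη : LinearIndependent ℤ (letterCount η)) :
    LinearIndependent ℤ (letterCount (Function.update η t (η s ++ η t))) := by
  let undo : (Fin n → ℤ) →ₗ[ℤ] (Fin n → ℤ) :=
    LinearMap.id - LinearMap.single ℤ (fun _ => ℤ) t ∘ₗ LinearMap.proj s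
  refine LinearIndependent.of_comp undo ?_
  convert! hη using 1
  ext a c
  obtain rfl | hc := eq_or_ne c t
  · simp [undo, letterCount, hst]
  · simp [undo, letterCount, hc]

theorem exists_factorization_of_eq_nil {h : Fin (n + 1) → List α} {c : Fin (n + 1)}
    (hc : h c = []) :
    ∃ (η : Fin (n + 1) → List (Fin n)) (θ : Fin n → List α),
      (∀ s, h s = mApply θ (η s)) ∧ LinearIndependent ℤ (letterCount η) := by
  refine ⟨c.insertNth [] fun a => [a], fun a => h (c.succAbove a), fun s => ?_,
    LinearIndependent.of_comp (LinearMap.funLeft ℤ ℤ c.succAbove) ?_⟩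
  · induction s using Fin.succAboveCases c <;> simp [mApply, hc]
  · convert! Pi.linearIndependent_single_one (Fin n) ℤ using 1
    ext a b
    obtain rfl | hab := eq_or_ne a b
    · simp [letterCount, LinearMap.funLeft_apply]
    · simp [letterCount, LinearMap.funLeft_apply, hab.symm]

/-- The defect theorem, with the extra information that the letter counts are independent. -/
theorem exists_factorization_of_solves {h : Fin (n + 1) → List α} {E : WordEquation (n + 1)}
    (hE : E.1 ≠ E.2) (hs : Solves h E) :
    ∃ (η : Fin (n + 1) → List (Fin n)) (θ : Fin n → List α),
      (∀ c, h c = mApply θ (η c)) ∧ LinearIndependent ℤ (letterCount η) := by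
  induction hN : ∑ c, (h c).length using Nat.strong_induction_on generalizing h E with
  | _ N ih =>
    subst hN
    by_cases hne : ∀ c, h c ≠ []
    · obtain ⟨s, t, w, hst, hw, E', hE', hs'⟩ := exists_solves_update hne hE hs
      obtain ⟨η, θ, hfac, hη⟩ := ih _ (sum_length_update_lt (hne s) hw) hE' hs' rfl
      have hfac_s : h s = mApply θ (η s) := by simpa [hst] using hfac s
      have hfac_t : w = mApply θ (η t) := by simpa using hfac t
      refine ⟨Function.update η t (η s ++ η t), θ, fun c => ?_,
        linearIndependent_letterCount_update hst hη⟩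
      obtain rfl | hc := eq_or_ne c t
      · rw [Function.update_self, mApply_append, ← hfac_s, ← hfac_t, hw]
      · simpa [hc] using hfac c
    · push Not at hne
      obtain ⟨c, hc⟩ := hne
      exact exists_factorization_of_eq_nil hc

theorem IsPeriodic.exists_mApply_eq {h : Fin n → List α} (hh : IsPeriodic h) :
    ∃ r : List α, ∀ w, ∃ e : ℕ, mApply h w = (List.replicate e r).flatten := by
  obtain ⟨r, hr⟩ := hh
  refine ⟨r, fun w => ?_⟩
  induction w with
  | nil => exact ⟨0, rfl⟩
  | cons c w ih =>
    obtain ⟨d, hd⟩ := hr c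
    obtain ⟨e, he⟩ := ih
    exact ⟨d + e, by rw [mApply_cons, hd, he, List.replicate_add, List.flatten_append]⟩

theorem isPeriodic_of_fin_one (h : Fin 1 → List α) : IsPeriodic h :=
  ⟨h 0, fun c => ⟨1, by simp [Subsingleton.elim c 0]⟩⟩

theorem IsPeriodic.comp {θ : Fin k → List α} (hθ : IsPeriodic θ) (η : Fin n → List (Fin k)) :
    IsPeriodic fun c => mApply θ (η c) := by
  obtain ⟨r, hr⟩ := hθ.exists_mApply_eq
  exact ⟨r, fun c => hr (η c)⟩

theorem mApply_injective_of_not_isPeriodic {θ : Fin 2 → List α} (hθ : ¬IsPeriodic θ) :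
    Function.Injective (mApply θ) := by
  intro u v huv
  by_contra hne
  obtain ⟨η, ρ, hfac, -⟩ := exists_factorization_of_solves (E := (u, v)) hne huv
  exact hθ (funext hfac ▸ (isPeriodic_of_fin_one ρ).comp η)

theorem exists_binary_of_solves {h : Fin 3 → List α} (hh : ¬IsPeriodic h) {E : WordEquation 3}
    (hE : E.1 ≠ E.2) (hs : Solves h E) :
    ∃ η : Fin 3 → List (Fin 2), LinearIndependent ℤ (letterCount η) ∧
      ∀ F, Solves η F ↔ Solves h F := by
  obtain ⟨η, θ, hfac, hη⟩ := exists_factorization_of_solves hE hs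
  obtain rfl : h = fun c => mApply θ (η c) := funext hfac
  have hθ : ¬IsPeriodic θ := fun hθ => hh (hθ.comp η)
  refine ⟨η, hη, fun F => ?_⟩
  rw [Solves, Solves, ← mApply_mApply, ← mApply_mApply]
  exact (mApply_injective_of_not_isPeriodic hθ).eq_iff.symm

/-- The differences `|u|_c - |v|_c` for the equation `u = v`. -/
def countDiff (E : WordEquation n) : Fin n → ℤ :=
  fun c => E.1.count c - E.2.count c

theorem countP_mApply_eq_iff (h : Fin n → List α) (p : α → Bool) (E : WordEquation n) :
    (mApply h E.1).countP p = (mApply h E.2).countP p ↔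
      countDiff E ⬝ᵥ (fun c => ((h c).countP p : ℤ)) = 0 := by
  simp only [countP_mApply, dotProduct, countDiff, sub_mul, Finset.sum_sub_distrib, sub_eq_zero]
  norm_cast

theorem IsPeriodic.solves_iff {h : Fin n → List α} (hh : IsPeriodic h) (E : WordEquation n) :
    Solves h E ↔ countDiff E ⬝ᵥ (fun c => ((h c).length : ℤ)) = 0 := by
  simp only [← List.countP_true, ← countP_mApply_eq_iff]
  refine ⟨congrArg _, fun hlen => ?_⟩
  obtain ⟨r, hr⟩ := hh.exists_mApply_eq
  obtain ⟨d, hd⟩ := hr E.1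
  obtain ⟨e, he⟩ := hr E.2
  rw [Solves, hd, he]
  rw [hd, he] at hlen
  obtain rfl | hr0 := eq_or_ne r []
  · simp
  · rw [Nat.mul_right_cancel (List.length_pos_iff.2 hr0) (by simpa using hlen : d * _ = e * _)]

theorem mRank_le_one_of_isPeriodic {h : Fin n → List ℕ} (hh : IsPeriodic h) : mRank h ≤ 1 := by
  obtain ⟨r, hr⟩ := hh
  refine Nat.sInf_le ⟨{r}, Finset.card_singleton r, fun c => ?_⟩
  obtain ⟨e, he⟩ := hr c
  exact ⟨List.replicate e r, fun u hu => by simp [List.eq_of_mem_replicate hu], he.symm⟩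

/-! ### Parallel vectors -/

/-- The vectors `r` and `s` are linearly dependent: all their `2 × 2` minors vanish. -/
def IsParallel {ι R : Type*} [Mul R] (r s : ι → R) : Prop :=
  ∀ i j, r i * s j = r j * s i

section Parallel

variable {ι κ R S : Type*} [CommRing R] [CommRing S]

theorem IsParallel.map {r s : ι → R} (h : IsParallel r s) (f : R →+* S) :
    IsParallel (f ∘ r) (f ∘ s) :=
  fun i j => by simpa using congrArg f (h i j)

theorem IsParallel.smul_eq {r s : ι → R} (h : IsParallel r s) (i : ι) : r i • s = s i • r :=
  funext fun j => (h i j).trans (mul_comm _ _)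

theorem not_isParallel_of_linearIndependent [Nontrivial R] {v : κ → ι → R}
    (hv : LinearIndependent R v) {a b : κ} (hab : a ≠ b) : ¬IsParallel (v a) (v b) := by
  refine fun h => hv.ne_zero a (funext fun i => ?_)
  refine ((LinearIndepOn.pair_iff v hab).1 (hv.linearIndepOn _) (-v b i) (v a i) ?_).2
  rw [h.smul_eq i, neg_smul, neg_add_cancel]

theorem isParallel_of_cross_eq_zero {v w : Fin 3 → R} (h : v ⨯₃ w = 0) : IsParallel v w := by
  have h₀ := congrFun h 0
  have h₁ := congrFun h 1
  have h₂ := congrFun h 2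
  simp only [cross_apply, Matrix.cons_val, Pi.zero_apply] at h₀ h₁ h₂
  intro i j
  fin_cases i <;> fin_cases j <;> grind

theorem isParallel_cross {v w r : Fin 3 → R} (hv : r ⬝ᵥ v = 0) (hw : r ⬝ᵥ w = 0) :
    IsParallel (v ⨯₃ w) r :=
  isParallel_of_cross_eq_zero <| by
    rw [cross_cross_eq_smul_sub_smul, dotProduct_comm v, dotProduct_comm w, hv, hw, zero_smul,
      zero_smul, sub_zero]

variable [IsDomain R]

theorem IsParallel.dotProduct_eq_zero [Fintype ι] {r s v : ι → R} (h : IsParallel r s)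
    (hr : r ≠ 0) (hv : r ⬝ᵥ v = 0) : s ⬝ᵥ v = 0 := by
  obtain ⟨i, hi⟩ := Function.ne_iff.1 hr
  refine (mul_eq_zero.1 ?_).resolve_left hi
  rw [← smul_eq_mul, ← smul_dotProduct, h.smul_eq i, smul_dotProduct, hv, smul_zero]

theorem IsParallel.of_common {r s v : ι → R} (hv : v ≠ 0) (hr : IsParallel v r)
    (hs : IsParallel v s) : IsParallel r s := by
  obtain ⟨l, hl⟩ := Function.ne_iff.1 hv
  refine fun i j => mul_left_cancel₀ hl ?_
  linear_combination s j * hr l i + r l * hs i j - s i * hr l j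

theorem isParallel_of_dotProduct_eq_zero {v w r s : Fin 3 → R} (hvw : ¬IsParallel v w)
    (hrv : r ⬝ᵥ v = 0) (hrw : r ⬝ᵥ w = 0) (hsv : s ⬝ᵥ v = 0) (hsw : s ⬝ᵥ w = 0) :
    IsParallel r s :=
  .of_common (mt isParallel_of_cross_eq_zero hvw) (isParallel_cross hrv hrw)
    (isParallel_cross hsv hsw)

end Parallel

/-! ### Fox derivatives -/

section Fox

variable {R S : Type*}

/-- The Fox derivative of a word with respect to the letter `s`, evaluated at `q`: the sum of the
values of the prefixes that are followed by `s`. -/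
def foxDeriv [Semiring R] (q : Fin n → R) (s : Fin n) : List (Fin n) → R
  | [] => 0
  | c :: w => (if c = s then 1 else 0) + q c * foxDeriv q s w

/-- The Fox derivatives of `u` minus those of `v`, for the equation `u = v`. -/
def foxRow [Ring R] (q : Fin n → R) (E : WordEquation n) : Fin n → R :=
  fun s => foxDeriv q s E.1 - foxDeriv q s E.2

theorem foxDeriv_append [Semiring R] (q : Fin n → R) (s : Fin n) (u v : List (Fin n)) :
    foxDeriv q s (u ++ v) = foxDeriv q s u + (u.map q).prod * foxDeriv q s v := by
  induction u with
  | nil => simp [foxDeriv]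
  | cons c u ih =>
    simp only [List.cons_append, foxDeriv, ih, List.map_cons, List.prod_cons, mul_add, mul_assoc,
      add_assoc]

theorem map_foxDeriv [Semiring R] [Semiring S] (f : R →+* S) (q : Fin n → R) (s : Fin n)
    (w : List (Fin n)) : f (foxDeriv q s w) = foxDeriv (f ∘ q) s w := by
  induction w with
  | nil => simp [foxDeriv]
  | cons c w ih => simp [foxDeriv, ih, apply_ite f]

theorem foxDeriv_one [Semiring R] (s : Fin n) (w : List (Fin n)) :
    foxDeriv (1 : Fin n → R) s w = w.count s := by
  induction w with
  | nil => simp [foxDeriv]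
  | cons c w ih => simp [foxDeriv, ih, List.count_cons, add_comm]

theorem foxDeriv_mApply [Semiring R] (q : Fin k → R) (η : Fin n → List (Fin k)) (a : Fin k)
    (w : List (Fin n)) :
    foxDeriv q a (mApply η w) =
      (fun s => foxDeriv (fun c => ((η c).map q).prod) s w) ⬝ᵥ fun s => foxDeriv q a (η s) := by
  induction w with
  | nil => simp [foxDeriv, mApply_nil, dotProduct]
  | cons c w ih =>
    rw [mApply_cons, foxDeriv_append, ih]
    simp [foxDeriv, dotProduct, add_mul, Finset.sum_add_distrib, Finset.mul_sum, mul_assoc]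

theorem foxRow_eq_zero_iff [Ring R] [IsDomain R] [Semiring S] [Nontrivial S] (ε : R →+* S)
    {q : Fin n → R} (hε : ∀ c, ε (q c) = 0) (hq : ∀ c, q c ≠ 0) (E : WordEquation n) :
    foxRow q E = 0 ↔ E.1 = E.2 := by
  refine ⟨fun h => ?_, fun h => funext fun s => by rw [foxRow, h, sub_self, Pi.zero_apply]⟩
  obtain ⟨u, v⟩ := E
  replace h (s : Fin n) : foxDeriv q s u = foxDeriv q s v := sub_eq_zero.1 (congrFun h s)
  induction u generalizing v with
  | nil =>
    obtain _ | ⟨d, v⟩ := v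
    · rfl
    · simpa [foxDeriv, hε] using congrArg ε (h d)
  | cons c u ih =>
    obtain _ | ⟨d, v⟩ := v
    · simpa [foxDeriv, hε] using congrArg ε (h c)
    · obtain rfl : d = c := by
        by_contra hdc
        simpa [foxDeriv, hε, hdc] using congrArg ε (h c)
      exact congrArg _ (ih v fun s => mul_left_cancel₀ (hq d) (add_left_cancel (h s)))

end Fox

/-! ### Specialisation along a morphism -/

/-- The vector of letter multiplicities of a word, as an exponent vector. -/
noncomputable def parikh (w : List (Fin n)) : Fin n →₀ ℕ :=
  Multiset.toFinsupp (w : Multiset (Fin n))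

/-- The linear map on exponent vectors that the morphism `η` induces. -/
noncomputable def exponentMap (η : Fin n → List (Fin k)) : (Fin n →₀ ℕ) →ₗ[ℕ] (Fin k →₀ ℕ) :=
  Finsupp.linearCombination ℕ fun c => parikh (η c)

/-- The commutative image of the morphism `η`: the substitution of the monomial of `η c` for the
variable `c`. -/
noncomputable def substHom (η : Fin n → List (Fin k)) :
    MvPolynomial (Fin n) ℤ →+* MvPolynomial (Fin k) ℤ :=
  MvPolynomial.eval₂Hom MvPolynomial.C fun c => MvPolynomial.monomial (parikh (η c)) 1

/-- The specialisation along `η` of the vector of Fox derivatives of the equation `E`. -/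
noncomputable def imageRow (η : Fin n → List (Fin k)) (E : WordEquation n) :
    Fin n → MvPolynomial (Fin k) ℤ :=
  fun s => substHom η (foxRow MvPolynomial.X E s)

/-- The vector of Fox derivatives of the words `η c` with respect to the letter `a`. -/
noncomputable def derivVec (η : Fin n → List (Fin k)) (a : Fin k) :
    Fin n → MvPolynomial (Fin k) ℤ :=
  fun s => foxDeriv MvPolynomial.X a (η s)

theorem parikh_apply (w : List (Fin n)) (a : Fin n) : parikh w a = w.count a := by
  simp [parikh]

theorem parikh_eq_zero_iff {w : List (Fin n)} : parikh w = 0 ↔ w = [] := by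
  simp [parikh]

theorem parikh_cons (c : Fin n) (w : List (Fin n)) :
    parikh (c :: w) = Finsupp.single c 1 + parikh w := by
  rw [parikh, ← Multiset.cons_coe, ← Multiset.singleton_add, map_add,
    Multiset.toFinsupp_singleton, parikh]

theorem prod_map_X (w : List (Fin n)) :
    (w.map (MvPolynomial.X (R := ℤ))).prod = MvPolynomial.monomial (parikh w) 1 := by
  induction w with
  | nil => simp [parikh_eq_zero_iff.2]
  | cons c w ih =>
    rw [List.map_cons, List.prod_cons, ih, parikh_cons, MvPolynomial.X,
      MvPolynomial.monomial_mul, one_mul]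

theorem exponentMap_apply (η : Fin n → List (Fin k)) (μ : Fin n →₀ ℕ) (a : Fin k) :
    exponentMap η μ a = ∑ c, μ c * (η c).count a := by
  simp [exponentMap, Finsupp.linearCombination_apply, Finsupp.sum_fintype,
    Finsupp.finsetSum_apply, parikh_apply]

theorem exponentMap_mono (η : Fin n → List (Fin k)) : Monotone (exponentMap η) := by
  intro μ ν h a
  rw [exponentMap_apply, exponentMap_apply]
  exact Finset.sum_le_sum fun c _ => Nat.mul_le_mul_right _ (h c)

theorem substHom_monomial (η : Fin n → List (Fin k)) (μ : Fin n →₀ ℕ) (r : ℤ) :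
    substHom η (MvPolynomial.monomial μ r) = MvPolynomial.monomial (exponentMap η μ) r := by
  rw [substHom, MvPolynomial.coe_eval₂Hom, MvPolynomial.eval₂_monomial]
  simp only [MvPolynomial.monomial_pow, one_pow, Finsupp.prod, ← MvPolynomial.monomial_sum_one,
    MvPolynomial.C_mul_monomial, mul_one]
  rfl

theorem coeff_substHom (η : Fin n → List (Fin k)) (t : MvPolynomial (Fin n) ℤ) (ν : Fin k →₀ ℕ) :
    (substHom η t).coeff ν = ∑ μ ∈ t.support with exponentMap η μ = ν, t.coeff μ := by
  conv_lhs => rw [t.as_sum, map_sum, MvPolynomial.coeff_sum]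
  simp only [substHom_monomial, MvPolynomial.coeff_monomial, Finset.sum_filter]

theorem imageRow_eq_foxRow (η : Fin n → List (Fin k)) (E : WordEquation n) :
    imageRow η E = foxRow (fun c => MvPolynomial.monomial (parikh (η c)) 1) E := by
  ext1 s
  have hX : substHom η ∘ MvPolynomial.X = fun c => MvPolynomial.monomial (parikh (η c)) 1 :=
    funext fun c => by simp [substHom]
  rw [imageRow, foxRow, map_sub, map_foxDeriv, map_foxDeriv, hX, foxRow]

theorem solves_iff_dotProduct {η : Fin n → List (Fin k)} {E : WordEquation n} :
    Solves η E ↔ ∀ a, imageRow η E ⬝ᵥ derivVec η a = 0 := by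
  rw [Solves, ← foxRow_eq_zero_iff (E := (mApply η E.1, mApply η E.2))
    (MvPolynomial.constantCoeff (σ := Fin k) (R := ℤ)) (q := MvPolynomial.X) (by simp)
    MvPolynomial.X_ne_zero, funext_iff]
  refine forall_congr' fun a => ?_
  rw [imageRow_eq_foxRow]
  simp only [foxRow, foxDeriv_mApply, prod_map_X, ← sub_dotProduct]
  rfl

theorem imageRow_ne_zero {η : Fin n → List (Fin k)} (hne : ∀ c, η c ≠ []) {E : WordEquation n}
    (hE : E.1 ≠ E.2) : imageRow η E ≠ 0 := by
  rw [imageRow_eq_foxRow]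
  refine mt (foxRow_eq_zero_iff MvPolynomial.constantCoeff (fun c => ?_) (by simp) E).1 hE
  rw [MvPolynomial.constantCoeff_monomial, if_neg (mt parikh_eq_zero_iff.1 (hne c))]

theorem imageRow_singleton_nil_ne_zero (η : Fin n → List (Fin k)) (x : Fin n) :
    imageRow η ([x], []) ≠ 0 :=
  Function.ne_iff.2 ⟨x, by simp [imageRow, foxRow, foxDeriv]⟩

theorem Solves.of_isParallel {η : Fin n → List (Fin k)} {E F : WordEquation n} (hE : Solves η E)
    (h0 : imageRow η E ≠ 0) (h : IsParallel (imageRow η E) (imageRow η F)) : Solves η F :=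
  solves_iff_dotProduct.2 fun a => h.dotProduct_eq_zero h0 (solves_iff_dotProduct.1 hE a)

theorem not_isParallel_derivVec {η : Fin n → List (Fin k)}
    (hη : LinearIndependent ℤ (letterCount η)) {a b : Fin k} (hab : a ≠ b) :
    ¬IsParallel (derivVec η a) (derivVec η b) := by
  have eval_one (a : Fin k) : MvPolynomial.eval 1 ∘ derivVec η a = letterCount η a := by
    ext s
    have hX : MvPolynomial.eval 1 ∘ MvPolynomial.X = (1 : Fin k → ℤ) := funext fun c => by simp
    rw [Function.comp_apply, derivVec, map_foxDeriv, hX, foxDeriv_one, letterCount]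
  intro h
  apply not_isParallel_of_linearIndependent hη hab
  simpa only [eval_one] using h.map (MvPolynomial.eval 1)

theorem isParallel_imageRow {η : Fin 3 → List (Fin 2)} (hη : LinearIndependent ℤ (letterCount η))
    {E F : WordEquation 3} (hE : Solves η E) (hF : Solves η F) :
    IsParallel (imageRow η E) (imageRow η F) := by
  rw [solves_iff_dotProduct] at hE hF
  exact isParallel_of_dotProduct_eq_zero (not_isParallel_derivVec hη zero_ne_one)
    (hE 0) (hE 1) (hF 0) (hF 1)

/-! ### Relations -/

/-- The integer vectors orthogonal to all letter counts of `η`, that is, the differences of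
exponent vectors which `exponentMap η` identifies. -/
def relations (η : Fin n → List (Fin k)) : Set (Fin n → ℤ) :=
  {d | ∀ a, d ⬝ᵥ letterCount η a = 0}

theorem exponentMap_eq_iff {η : Fin n → List (Fin k)} {μ ν : Fin n →₀ ℕ} :
    exponentMap η μ = exponentMap η ν ↔ (fun c => (μ c : ℤ) - ν c) ∈ relations η := by
  rw [Finsupp.ext_iff]
  refine forall_congr' fun a => ?_
  rw [exponentMap_apply, exponentMap_apply]
  simp only [dotProduct, letterCount, sub_mul, Finset.sum_sub_distrib, sub_eq_zero]
  norm_cast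

theorem single_one_mem_relations_iff {η : Fin n → List (Fin k)} {c : Fin n} :
    Pi.single c 1 ∈ relations η ↔ η c = [] := by
  simp [relations, letterCount, List.count_eq_zero, List.eq_nil_iff_forall_not_mem]

theorem Solves.countDiff_mem_relations {η : Fin n → List (Fin k)} {E : WordEquation n}
    (h : Solves η E) : countDiff E ∈ relations η :=
  fun a => (countP_mApply_eq_iff η (· == a) E).1 (congrArg _ h)

theorem isParallel_of_mem_relations {η : Fin 3 → List (Fin 2)}
    (hη : LinearIndependent ℤ (letterCount η)) {d e : Fin 3 → ℤ} (hd : d ∈ relations η)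
    (he : e ∈ relations η) : IsParallel d e :=
  isParallel_of_dotProduct_eq_zero (not_isParallel_of_linearIndependent hη zero_ne_one)
    (hd 0) (hd 1) (he 0) (he 1)

theorem relations_eq_of_mem {η ζ : Fin 3 → List (Fin 2)}
    (hη : LinearIndependent ℤ (letterCount η)) (hζ : LinearIndependent ℤ (letterCount ζ))
    {d : Fin 3 → ℤ} (hd : d ≠ 0) (hdη : d ∈ relations η) (hdζ : d ∈ relations ζ) :
    relations η = relations ζ :=
  Set.Subset.antisymm
    (fun _ he a => (isParallel_of_mem_relations hη hdη he).dotProduct_eq_zero hd (hdζ a))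
    fun _ he a => (isParallel_of_mem_relations hζ hdζ he).dotProduct_eq_zero hd (hdη a)

theorem substHom_eq_zero_iff {η : Fin n → List (Fin k)} {t : MvPolynomial (Fin n) ℤ} :
    substHom η t = 0 ↔
      ∀ ν, ∑ μ ∈ t.support with exponentMap η μ = exponentMap η ν, t.coeff μ = 0 := by
  simp only [MvPolynomial.ext_iff, coeff_substHom, MvPolynomial.coeff_zero]
  refine ⟨fun h ν => h _, fun h ν => ?_⟩
  by_cases hν : ∃ μ, exponentMap η μ = ν
  · obtain ⟨μ, rfl⟩ := hν
    exact h μ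
  · rw [not_exists] at hν
    simp [hν]

theorem substHom_eq_zero_congr {η ζ : Fin n → List (Fin k)} (h : relations η = relations ζ)
    (t : MvPolynomial (Fin n) ℤ) : substHom η t = 0 ↔ substHom ζ t = 0 := by
  have hiff (μ ν : Fin n →₀ ℕ) :
      exponentMap η μ = exponentMap η ν ↔ exponentMap ζ μ = exponentMap ζ ν := by
    rw [exponentMap_eq_iff, h, exponentMap_eq_iff]
  simp only [substHom_eq_zero_iff, hiff]

/-- The `2 × 2` minor in columns `x` and `y` of the Fox derivatives of `E` and `F`. -/
noncomputable def minor (E F : WordEquation n) (x y : Fin n) : MvPolynomial (Fin n) ℤ :=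
  foxRow MvPolynomial.X E x * foxRow MvPolynomial.X F y -
    foxRow MvPolynomial.X E y * foxRow MvPolynomial.X F x

theorem isParallel_imageRow_iff {η : Fin n → List (Fin k)} {E F : WordEquation n} :
    IsParallel (imageRow η E) (imageRow η F) ↔ ∀ x y, substHom η (minor E F x y) = 0 := by
  simp only [IsParallel, imageRow, minor, map_sub, map_mul, sub_eq_zero]

theorem exists_solves_imageRow_ne_zero {η ζ : Fin n → List (Fin k)}
    (h : relations η = relations ζ) {E : WordEquation n} (hE : E.1 ≠ E.2) (hηE : Solves η E)
    (hζE : Solves ζ E) : ∃ G, Solves η G ∧ Solves ζ G ∧ imageRow ζ G ≠ 0 := by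
  by_cases hne : ∀ c, ζ c ≠ []
  · exact ⟨E, hηE, hζE, imageRow_ne_zero hne hE⟩
  · push Not at hne
    obtain ⟨x, hx⟩ := hne
    have hηx : η x = [] := single_one_mem_relations_iff.1 (h ▸ single_one_mem_relations_iff.2 hx)
    exact ⟨([x], []), by simp [Solves, mApply, hηx], by simp [Solves, mApply, hx],
      imageRow_singleton_nil_ne_zero ζ x⟩

theorem Solves.of_relations_eq {η ζ : Fin 3 → List (Fin 2)}
    (hη : LinearIndependent ℤ (letterCount η)) (h : relations η = relations ζ)
    {E F : WordEquation 3} (hE : E.1 ≠ E.2) (hηE : Solves η E) (hζE : Solves ζ E)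
    (hηF : Solves η F) : Solves ζ F := by
  obtain ⟨G, hηG, hζG, hG⟩ := exists_solves_imageRow_ne_zero h hE hηE hζE
  refine hζG.of_isParallel hG (isParallel_imageRow_iff.2 fun x y => ?_)
  rw [← substHom_eq_zero_congr h]
  exact isParallel_imageRow_iff.1 (isParallel_imageRow hη hηG hηF) x y

/-! ### Chains of monomials -/

section Chains

variable {σ : Type*}

/-- A polynomial with nonnegative coefficients whose exponents are pairwise comparable. -/
structure IsMonomialChain (p : MvPolynomial σ ℤ) : Prop where
  coeff_nonneg : ∀ μ, 0 ≤ p.coeff μ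
  isChain : IsChain (· ≤ ·) (p.support : Set (σ →₀ ℕ))

/-- `IsChainSum N p` says that `p` is a sum of `N` monomial chains. -/
inductive IsChainSum : ℕ → MvPolynomial σ ℤ → Prop
  | zero : IsChainSum 0 0
  | chain_add {N p q} : IsMonomialChain p → IsChainSum N q → IsChainSum (N + 1) (p + q)

theorem isMonomialChain_zero : IsMonomialChain (0 : MvPolynomial σ ℤ) :=
  ⟨fun _ => le_rfl, by simp⟩

theorem IsMonomialChain.X_mul {p : MvPolynomial σ ℤ} (hp : IsMonomialChain p) (c : σ) :
    IsMonomialChain (MvPolynomial.X c * p) := by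
  classical
  refine ⟨fun μ => ?_, ?_⟩
  · rw [MvPolynomial.coeff_X_mul']
    split_ifs
    exacts [hp.coeff_nonneg _, le_rfl]
  · rw [MvPolynomial.support_X_mul, Finset.coe_map]
    exact hp.isChain.image_of_map_rel _ _ _ fun _ _ h => by simpa using h

theorem IsMonomialChain.one_add {p : MvPolynomial σ ℤ} (hp : IsMonomialChain p) :
    IsMonomialChain (1 + p) := by
  classical
  refine ⟨fun μ => ?_, ?_⟩
  · rw [MvPolynomial.coeff_add, MvPolynomial.coeff_one]
    exact add_nonneg (by split_ifs <;> simp) (hp.coeff_nonneg μ)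
  · refine (hp.isChain.insert (a := 0) fun μ _ _ => Or.inl zero_le).mono fun μ hμ => ?_
    rcases Finset.mem_union.1 (MvPolynomial.support_add hμ) with h | h
    · left
      simpa using h
    · exact Or.inr h

theorem isMonomialChain_foxDeriv (s : Fin n) (w : List (Fin n)) :
    IsMonomialChain (foxDeriv (MvPolynomial.X (R := ℤ)) s w) := by
  induction w with
  | nil => exact isMonomialChain_zero
  | cons c w ih =>
    rw [foxDeriv]
    split_ifs
    · exact (ih.X_mul c).one_add
    · rw [zero_add]
      exact ih.X_mul c

theorem IsChainSum.coeff_nonneg {N : ℕ} {p : MvPolynomial σ ℤ} (hp : IsChainSum N p)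
    (μ : σ →₀ ℕ) : 0 ≤ p.coeff μ := by
  induction hp with
  | zero => exact le_rfl
  | chain_add hp _ ih => exact add_nonneg (hp.coeff_nonneg μ) ih

theorem IsChainSum.add {M N : ℕ} {p q : MvPolynomial σ ℤ} (hp : IsChainSum M p)
    (hq : IsChainSum N q) : IsChainSum (M + N) (p + q) := by
  induction hp with
  | zero => rwa [zero_add, zero_add]
  | @chain_add M p _ hp _ ih =>
    rw [add_right_comm M, add_assoc p]
    exact .chain_add hp ih

theorem IsChainSum.X_mul {N : ℕ} {p : MvPolynomial σ ℤ} (hp : IsChainSum N p) (c : σ) :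
    IsChainSum N (MvPolynomial.X c * p) := by
  induction hp with
  | zero =>
    rw [mul_zero]
    exact .zero
  | chain_add hp _ ih =>
    rw [mul_add]
    exact ih.chain_add (hp.X_mul c)

theorem IsMonomialChain.isChainSum_foxDeriv_mul {p : MvPolynomial (Fin n) ℤ}
    (hp : IsMonomialChain p) (s : Fin n) (w : List (Fin n)) :
    IsChainSum (w.count s) (foxDeriv MvPolynomial.X s w * p) := by
  induction w with
  | nil =>
    rw [foxDeriv, zero_mul]
    exact .zero
  | cons c w ih =>
    rw [foxDeriv, List.count_cons, add_mul, mul_assoc]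
    obtain rfl | hc := eq_or_ne c s
    · simpa [add_comm] using (ih.X_mul c).chain_add hp
    · simpa [hc] using ih.X_mul c

theorem isChainSum_foxDeriv_mul_foxDeriv (s t : Fin n) (u v : List (Fin n)) :
    IsChainSum (u.count s) (foxDeriv (MvPolynomial.X (R := ℤ)) s u * foxDeriv MvPolynomial.X t v) :=
  (isMonomialChain_foxDeriv t v).isChainSum_foxDeriv_mul s u

theorem minor_eq_sub_isChainSum (E F : WordEquation n) (x y : Fin n) :
    ∃ p q, minor E F x y = p - q ∧
      IsChainSum ((E.1 ++ E.2).count x + (E.1 ++ E.2).count y) p ∧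
      IsChainSum ((E.1 ++ E.2).count x + (E.1 ++ E.2).count y) q := by
  let term (s t : Fin n) (u v : List (Fin n)) : MvPolynomial (Fin n) ℤ :=
    foxDeriv MvPolynomial.X s u * foxDeriv MvPolynomial.X t v
  have chains := isChainSum_foxDeriv_mul_foxDeriv (n := n)
  rw [List.count_append, List.count_append]
  refine ⟨(term x y E.1 F.1 + term x y E.2 F.2) + (term y x E.1 F.2 + term y x E.2 F.1),
    (term x y E.1 F.2 + term x y E.2 F.1) + (term y x E.1 F.1 + term y x E.2 F.2), ?_,
    ((chains ..).add (chains ..)).add ((chains ..).add (chains ..)),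
    ((chains ..).add (chains ..)).add ((chains ..).add (chains ..))⟩
  simp only [minor, foxRow, term]
  ring

theorem IsChainSum.card_le_of_isAntichain {N : ℕ} {p : MvPolynomial σ ℤ} (hp : IsChainSum N p)
    {A : Finset (σ →₀ ℕ)} (hA : IsAntichain (· ≤ ·) (A : Set (σ →₀ ℕ))) (hAp : A ⊆ p.support) :
    A.card ≤ N := by
  classical
  induction hp generalizing A with
  | zero => simpa using hAp
  | @chain_add N p q hp _ ih =>
    have hchain : (A ∩ p.support).card ≤ 1 := by
      rw [Finset.card_le_one_iff_subsingleton, Finset.coe_inter, Set.inter_comm]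
      exact inter_subsingleton_of_isChain_of_isAntichain hp.isChain hA
    have hrest : (A \ p.support).card ≤ N := by
      refine ih (hA.subset (by simp)) fun μ hμ => ?_
      rw [Finset.mem_sdiff] at hμ
      exact (Finset.mem_union.1 (MvPolynomial.support_add (hAp hμ.1))).resolve_left hμ.2
    rw [← Finset.card_inter_add_card_sdiff A p.support]
    omega

open scoped Classical in
/-- The minimal ones among the exponents with positive coefficient in `t`. -/
noncomputable def minimalPos (t : MvPolynomial σ ℤ) : Finset (σ →₀ ℕ) :=
  {μ ∈ t.support | Minimal (fun ν => 0 < t.coeff ν) μ}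

theorem mem_minimalPos {t : MvPolynomial σ ℤ} {μ : σ →₀ ℕ} :
    μ ∈ minimalPos t ↔ Minimal (fun ν => 0 < t.coeff ν) μ := by
  simp only [minimalPos, Finset.mem_filter, MvPolynomial.mem_support_iff, and_iff_right_iff_imp]
  exact fun h => h.prop.ne'

theorem card_minimalPos_sub_le {N : ℕ} {p q : MvPolynomial σ ℤ} (hp : IsChainSum N p)
    (hq : ∀ μ, 0 ≤ q.coeff μ) : (minimalPos (p - q)).card ≤ N := by
  refine hp.card_le_of_isAntichain (fun μ hμ ν hν hne hle => hne ?_) fun μ hμ => ?_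
  · exact (mem_minimalPos.1 hν).eq_of_le (mem_minimalPos.1 hμ).prop hle
  · have hpos := (mem_minimalPos.1 hμ).prop
    rw [MvPolynomial.coeff_sub, sub_pos] at hpos
    exact MvPolynomial.mem_support_iff.2 ((hq μ).trans_lt hpos).ne'

end Chains

/-! ### Colliding exponents -/

theorem exists_mem_minimalPos_exponentMap_eq {η : Fin n → List (Fin k)}
    {t : MvPolynomial (Fin n) ℤ} (ht : substHom η t = 0) {μ : Fin n →₀ ℕ}
    (hμ : MinimalFor (· ∈ t.support) (exponentMap η) μ) :
    ∃ p ∈ minimalPos t, exponentMap η p = exponentMap η μ := by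
  obtain ⟨a, ha, hpos⟩ := Finset.exists_pos_of_sum_zero_of_exists_nonzero _
    (substHom_eq_zero_iff.1 ht μ)
    ⟨μ, Finset.mem_filter.2 ⟨hμ.prop, rfl⟩, MvPolynomial.mem_support_iff.1 hμ.prop⟩
  obtain ⟨p, hpa, hp⟩ := exists_minimal_le_of_wellFoundedLT (fun ν => 0 < t.coeff ν) a hpos
  have hle : exponentMap η p ≤ exponentMap η μ :=
    (exponentMap_mono η hpa).trans_eq (Finset.mem_filter.1 ha).2
  exact ⟨p, mem_minimalPos.2 hp,
    hle.antisymm (hμ.le_of_le (MvPolynomial.mem_support_iff.2 hp.prop.ne') hle)⟩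

/-- The differences of a minimal exponent with positive coefficient in `t` and a minimal exponent
with negative coefficient: if `substHom η t = 0`, then `exponentMap η` identifies such a pair. -/
noncomputable def collisions (t : MvPolynomial (Fin n) ℤ) : Finset (Fin n → ℤ) :=
  (minimalPos t ×ˢ minimalPos (-t)).image fun p c => (p.1 c : ℤ) - p.2 c

theorem ne_zero_of_mem_collisions {t : MvPolynomial (Fin n) ℤ} {d : Fin n → ℤ}
    (hd : d ∈ collisions t) : d ≠ 0 := by
  rintro rfl
  obtain ⟨⟨p, q⟩, hpq, h⟩ := Finset.mem_image.1 hd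
  obtain ⟨hp, hq⟩ := Finset.mem_product.1 hpq
  have hcoeff := (mem_minimalPos.1 hq).prop
  obtain rfl : p = q := Finsupp.ext fun c => by exact_mod_cast sub_eq_zero.1 (congrFun h c)
  rw [MvPolynomial.coeff_neg, neg_pos] at hcoeff
  exact hcoeff.not_gt (mem_minimalPos.1 hp).prop

theorem exists_mem_collisions_mem_relations {η : Fin n → List (Fin k)}
    {t : MvPolynomial (Fin n) ℤ} (ht : t ≠ 0) (h : substHom η t = 0) :
    ∃ d ∈ collisions t, d ∈ relations η := by
  obtain ⟨μ, hμ⟩ :=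
    t.support.exists_minimalFor (exponentMap η) (MvPolynomial.support_nonempty.2 ht)
  obtain ⟨p, hp, hpμ⟩ := exists_mem_minimalPos_exponentMap_eq h hμ
  obtain ⟨q, hq, hqμ⟩ := exists_mem_minimalPos_exponentMap_eq (t := -t)
    (by rw [map_neg, h, neg_zero]) (by rwa [MvPolynomial.support_neg])
  exact ⟨_, Finset.mem_image_of_mem _ (Finset.mk_mem_product hp hq),
    exponentMap_eq_iff.1 (hpμ.trans hqμ.symm)⟩

theorem card_collisions_minor_le (E F : WordEquation n) (x y : Fin n) :
    (collisions (minor E F x y)).card ≤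
      ((E.1 ++ E.2).count x + (E.1 ++ E.2).count y) ^ 2 := by
  obtain ⟨p, q, hpq, hp, hq⟩ := minor_eq_sub_isChainSum E F x y
  refine Finset.card_image_le.trans ?_
  rw [Finset.card_product, hpq, neg_sub, sq]
  exact Nat.mul_le_mul (card_minimalPos_sub_le hp hq.coeff_nonneg)
    (card_minimalPos_sub_le hq hp.coeff_nonneg)

/-! ### Independent systems -/

/-- The system `E` is independent for morphisms into words over `α`: no equation follows from the
remaining ones. -/
def IsIndependent {ι : Type*} (α : Type*) (E : ι → WordEquation n) : Prop :=
  ∀ i, ∃ h : Fin n → List α, (∀ j ≠ i, Solves h (E j)) ∧ ¬Solves h (E i)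

theorem Solves.of_countDiff_ne_zero {h g : Fin 3 → List α} (hh : ¬IsPeriodic h)
    {F G : WordEquation 3} (hF : countDiff F ≠ 0) (hhF : Solves h F) (hgF : Solves g F)
    (hhG : Solves h G) : Solves g G := by
  have hne : F.1 ≠ F.2 := fun he => hF (funext fun c => by simp [countDiff, he])
  obtain ⟨η, hη, hηh⟩ := exists_binary_of_solves hh hne hhF
  rw [← hηh] at hhF hhG
  by_cases hg : IsPeriodic g
  · rw [hg.solves_iff] at hgF ⊢
    exact (isParallel_of_mem_relations hη hhF.countDiff_mem_relations
      hhG.countDiff_mem_relations).dotProduct_eq_zero hF hgF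
  · obtain ⟨ζ, hζ, hζg⟩ := exists_binary_of_solves hg hne hgF
    rw [← hζg] at hgF ⊢
    exact .of_relations_eq hη (relations_eq_of_mem hη hζ hF hhF.countDiff_mem_relations
      hgF.countDiff_mem_relations) hne hhF hgF hhG

theorem exists_two_le_count_of_countDiff_eq_zero {F : WordEquation n} (hF : F.1 ≠ F.2)
    (hbal : countDiff F = 0) : ∃ x, 2 ≤ (F.1 ++ F.2).count x := by
  have hcount (x : Fin n) : F.1.count x = F.2.count x := by
    exact_mod_cast sub_eq_zero.1 (congrFun hbal x)
  obtain ⟨x, hx⟩ : ∃ x, x ∈ F.1 := by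
    refine List.exists_mem_of_ne_nil _ fun hnil => hF ?_
    rw [hnil, eq_comm, List.eq_nil_iff_forall_not_mem]
    exact fun x => List.count_eq_zero.1 (by rw [← hcount, hnil, List.count_nil])
  refine ⟨x, ?_⟩
  have hpos := List.count_pos_iff.2 hx
  rw [List.count_append, ← hcount]
  omega

section Systems

variable {ι : Type*} {E : ι → WordEquation 3}

theorem IsIndependent.eq_of_countDiff_ne_zero (hind : IsIndependent α E) {h : Fin 3 → List α}
    (hh : ¬IsPeriodic h) (hs : ∀ j, Solves h (E j)) {i : ι} (hi : countDiff (E i) ≠ 0) (j : ι) :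
    i = j := by
  obtain ⟨g, hg, hgj⟩ := hind j
  by_contra hij
  exact hgj (.of_countDiff_ne_zero hh hi (hs i) (hg i hij) (hs j))

/-- Binary morphisms that witness, for every `k ≠ i`, that `E k` does not follow from the other
equations, together with a common solution `η i`. -/
structure IsSeparating (η : ι → Fin 3 → List (Fin 2)) (E : ι → WordEquation 3) (i : ι) : Prop where
  linearIndependent : ∀ k, LinearIndependent ℤ (letterCount (η k))
  solves_iff : ∀ j k, Solves (η k) (E j) ↔ (j = k → k = i)
  ne : (E i).1 ≠ (E i).2

theorem IsIndependent.exists_isSeparating (hind : IsIndependent α E) {h : Fin 3 → List α}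
    (hh : ¬IsPeriodic h) (hs : ∀ j, Solves h (E j)) (hbal : ∀ j, countDiff (E j) = 0) (i : ι) :
    ∃ η, IsSeparating η E i := by
  have hne : (E i).1 ≠ (E i).2 := by
    obtain ⟨g, -, hg⟩ := hind i
    exact fun he => hg (congrArg (mApply g) he)
  have witness (k : ι) :
      ∃ g : Fin 3 → List α, ¬IsPeriodic g ∧ ∀ j, Solves g (E j) ↔ (j = k → k = i) := by
    obtain rfl | hk := eq_or_ne k i
    · exact ⟨h, hh, fun j => by simp [hs j]⟩
    · obtain ⟨g, hg, hgk⟩ := hind k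
      refine ⟨g, fun hper => hgk ((hper.solves_iff _).2 (by rw [hbal, zero_dotProduct])),
        fun j => ?_⟩
      obtain rfl | hj := eq_or_ne j k
      · simp [hgk, hk]
      · simp [hg j hj, hj]
  choose g hper hg using witness
  choose η hη hηg using fun k => exists_binary_of_solves (hper k) hne ((hg k i).2 Eq.symm)
  exact ⟨η, hη, fun j k => (hηg k _).trans (hg k j), hne⟩

variable {η : ι → Fin 3 → List (Fin 2)} {i : ι}

theorem IsSeparating.eq_of_mem_relations (h : IsSeparating η E i) {d : Fin 3 → ℤ} (hd : d ≠ 0)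
    {k l : ι} (hk : d ∈ relations (η k)) (hl : d ∈ relations (η l)) : k = l := by
  have solves_base (k : ι) : Solves (η k) (E i) := (h.solves_iff i k).2 Eq.symm
  have eq_base {k l : ι} (hk : d ∈ relations (η k)) (hl : d ∈ relations (η l)) (hkl : k ≠ l) :
      l = i := by
    have heq := relations_eq_of_mem (h.linearIndependent k) (h.linearIndependent l) hd hk hl
    have hkE : Solves (η k) (E l) := (h.solves_iff l k).2 fun hlk => absurd hlk.symm hkl
    exact (h.solves_iff l l).1 (.of_relations_eq (h.linearIndependent k) heq h.ne
      (solves_base k) (solves_base l) hkE) rfl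
  by_contra hkl
  exact hkl ((eq_base hl hk (Ne.symm hkl)).trans (eq_base hk hl hkl).symm)

theorem IsSeparating.card_le_card (h : IsSeparating η E i) {S : Finset ι}
    {M : Finset (Fin 3 → ℤ)} (hM : ∀ d ∈ M, d ≠ 0)
    (hS : ∀ k ∈ S, ∃ d ∈ M, d ∈ relations (η k)) : S.card ≤ M.card :=
  Finset.card_le_card_of_forall_subsingleton (fun k d => d ∈ relations (η k)) hS
    fun d hd _ hk _ hl => h.eq_of_mem_relations (hM d hd) hk.2 hl.2

theorem IsSeparating.card_le_of_erasing [Fintype ι] (h : IsSeparating η E i)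
    (hη : ∀ k ≠ i, ∃ c, η k c = []) : Fintype.card ι ≤ 4 := by
  classical
  have hcard : (Finset.univ.erase i).card ≤
      (Finset.univ.image fun c : Fin 3 => (Pi.single c 1 : Fin 3 → ℤ)).card := by
    refine h.card_le_card (fun d hd => ?_) fun k hk => ?_
    · obtain ⟨c, -, rfl⟩ := Finset.mem_image.1 hd
      exact Pi.single_ne_zero_iff.2 one_ne_zero
    · obtain ⟨c, hc⟩ := hη k (Finset.ne_of_mem_erase hk)
      exact ⟨_, Finset.mem_image_of_mem _ (Finset.mem_univ c), single_one_mem_relations_iff.2 hc⟩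
  rw [Finset.card_erase_of_mem (Finset.mem_univ i), Finset.card_univ] at hcard
  have hcard_le := hcard.trans Finset.card_image_le
  rw [Finset.card_univ, Fintype.card_fin] at hcard_le
  omega

theorem IsSeparating.exists_minor_ne_zero (h : IsSeparating η E i) {p : ι} (hp : p ≠ i)
    (hηp : ∀ c, η p c ≠ []) : ∃ x y, minor (E i) (E p) x y ≠ 0 := by
  by_contra! hzero
  refine hp ((h.solves_iff p p).1 ?_ rfl)
  refine ((h.solves_iff i p).2 Eq.symm).of_isParallel (imageRow_ne_zero hηp h.ne) ?_
  exact isParallel_imageRow_iff.2 fun x y => by rw [hzero, map_zero]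

theorem IsSeparating.card_le_of_minor_ne_zero [Fintype ι] (h : IsSeparating η E i) {p : ι}
    {x y : Fin 3} (hxy : minor (E i) (E p) x y ≠ 0) :
    Fintype.card ι ≤ (((E i).1 ++ (E i).2).count x + ((E i).1 ++ (E i).2).count y) ^ 2 + 1 := by
  classical
  have hcard : (Finset.univ.erase p).card ≤ (collisions (minor (E i) (E p) x y)).card := by
    refine h.card_le_card (fun _ => ne_zero_of_mem_collisions) fun k hk => ?_
    have hkp : Solves (η k) (E p) :=
      (h.solves_iff p k).2 fun hpk => absurd hpk.symm (Finset.ne_of_mem_erase hk)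
    exact exists_mem_collisions_mem_relations hxy <| isParallel_imageRow_iff.1
      (isParallel_imageRow (h.linearIndependent k) ((h.solves_iff i k).2 Eq.symm) hkp) x y
  rw [Finset.card_erase_of_mem (Finset.mem_univ p), Finset.card_univ] at hcard
  exact Nat.le_add_of_sub_le (hcard.trans (card_collisions_minor_le ..))

theorem IsSeparating.exists_card_le [Fintype ι] (h : IsSeparating η E i)
    (hbal : countDiff (E i) = 0) :
    ∃ x y, x ≠ y ∧
      Fintype.card ι ≤ (((E i).1 ++ (E i).2).count x + ((E i).1 ++ (E i).2).count y) ^ 2 + 1 := by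
  by_cases hη : ∀ k ≠ i, ∃ c, η k c = []
  · obtain ⟨x, hx⟩ := exists_two_le_count_of_countDiff_eq_zero h.ne hbal
    obtain ⟨y, hy⟩ := exists_ne x
    refine ⟨x, y, hy.symm, (h.card_le_of_erasing hη).trans (le_add_right ?_)⟩
    exact Nat.pow_le_pow_left (le_add_right hx) 2
  · push Not at hη
    obtain ⟨p, hp, hηp⟩ := hη
    obtain ⟨x, y, hxy⟩ := h.exists_minor_ne_zero hp hηp
    refine ⟨x, y, ?_, h.card_le_of_minor_ne_zero hxy⟩
    rintro rfl
    exact hxy (sub_self _)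

end Systems

theorem isIndependent_of_solutions_ne {m : ℕ} {A : Finset ℕ} {E : Fin m → WordEquation n}
    (hE : ∀ S : Finset (Fin m), S ≠ Finset.univ →
      {h : Fin n → List ℕ | IntoAlph A h ∧ ∀ i ∈ S, Solves h (E i)} ≠
        {h | IntoAlph A h ∧ ∀ i, Solves h (E i)}) : IsIndependent ℕ E := by
  intro i
  by_contra! hi
  refine hE (Finset.univ.erase i) (by simp) (Set.ext fun h => and_congr_right fun _ => ?_)
  refine ⟨fun hs j => ?_, fun hs j _ => hs j⟩
  have hne (j : Fin m) (hj : j ≠ i) : Solves h (E j) :=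
    hs j (Finset.mem_erase.2 ⟨hj, Finset.mem_univ j⟩)
  obtain rfl | hj := eq_or_ne j i
  exacts [hi h hne, hne j hj]

end WordEquation

theorem independent_system_bound_general {ι α : Type*} [Fintype ι] {E : ι → WordEquation 3}
    (hind : WordEquation.IsIndependent α E)
    (hsol : ∃ h : Fin 3 → List α, (∀ j, WordEquation.Solves h (E j)) ∧ ¬WordEquation.IsPeriodic h)
    (i : ι) :
    ∃ x y, x ≠ y ∧
      Fintype.card ι ≤ (((E i).1 ++ (E i).2).count x + ((E i).1 ++ (E i).2).count y) ^ 2 + 1 := by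
  obtain ⟨h, hs, hh⟩ := hsol
  by_cases hbal : ∀ j, WordEquation.countDiff (E j) = 0
  · obtain ⟨η, hη⟩ := hind.exists_isSeparating hh hs hbal i
    exact hη.exists_card_le (hbal i)
  · push Not at hbal
    obtain ⟨j, hj⟩ := hbal
    have hj_unique := hind.eq_of_countDiff_ne_zero hh hs hj
    have hcard : Fintype.card ι ≤ 1 :=
      Fintype.card_le_one_iff.2 fun a b => (hj_unique a).symm.trans (hj_unique b)
    exact ⟨0, 1, zero_ne_one, hcard.trans (Nat.le_add_left 1 _)⟩

/-- If `E₁, …, E_m` is an independent system of word equations on three unknowns having a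
nonperiodic common solution, then there are two unknowns `x, y` such that
`m ≤ (|E₁|_x + |E₁|_y)² + 1`. -/
theorem independent_system_bound {m : ℕ}
    (A : Finset ℕ) (hA : ∀ a ∈ A, 0 < a)
    (hm : 0 < m)
    (eqs : Fin m → List (Fin 3) × List (Fin 3))
    (hind : ∀ S : Finset (Fin m), S ≠ Finset.univ →
      {h : Fin 3 → List ℕ | IntoAlph A h ∧
          ∀ i ∈ S, mApply h (eqs i).1 = mApply h (eqs i).2}
        ≠ {h : Fin 3 → List ℕ | IntoAlph A h ∧
            ∀ i : Fin m, mApply h (eqs i).1 = mApply h (eqs i).2})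
    (hsol : ∃ h : Fin 3 → List ℕ, IntoAlph A h ∧
      (∀ i : Fin m, mApply h (eqs i).1 = mApply h (eqs i).2) ∧ 1 < mRank h) :
    ∃ x y : Fin 3,
      m ≤ (((eqs ⟨0, hm⟩).1 ++ (eqs ⟨0, hm⟩).2).count x
            + ((eqs ⟨0, hm⟩).1 ++ (eqs ⟨0, hm⟩).2).count y) ^ 2 + 1 := by
  obtain ⟨h, -, hs, hrank⟩ := hsol
  have hper : ¬WordEquation.IsPeriodic h := fun hper =>
    hrank.not_ge (WordEquation.mRank_le_one_of_isPeriodic hper)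
  obtain ⟨x, y, -, hxy⟩ := independent_system_bound_general
    (WordEquation.isIndependent_of_solutions_ne hind) ⟨h, hs, hper⟩ ⟨0, hm⟩
  exact ⟨x, y, by rwa [Fintype.card_fin] at hxy⟩
end
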